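/- Fix ν > 0 and define c₀ = 1, c₁ = (ν²−1)/24, c₂ = (ν²−1)(ν²+23)/1152, c₃ = (ν²−1)(5ν⁴−298ν²+11237)/414720, c₄ = (ν²−1)(5ν⁶−1887ν⁴−241041ν²+2482411)/39813120, c₅ = (ν²−1)(7ν⁸−7420ν⁶+1451274ν⁴−220083004ν²+1363929895)/6688604160, c₆ = (ν²−1)(35ν¹⁰−78295ν⁸+76299326ν⁶+25171388146ν⁴−915974552561ν²+4175309343349)/4815794995200, and c₇ = (ν²−1)(5ν¹²−20190ν¹⁰+45700491ν⁸−19956117988ν⁶+7134232164555ν⁴−142838662997982ν²+525035501918789)/115579079884800. Then there exist constants C > 0 and Λ > 0 (depending only on ν) such that for all λ ≥ Λ, |Z(λ,ν) · λ^((ν-1)/(2ν)) · (2π)^((ν-1)/2) · √ν · exp(−ν·λ^(1/ν)) − Σ_{k=0}^{7} c_k·(ν·λ^(1/ν))^(−k)| ≤ C·λ^(−8/ν). -/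

import Mathlib

open scoped BigOperators

/-- The Conway-Maxwell-Poisson normalizing constant `Z(λ,ν) = ∑_{i=0}^∞ λ^i/(i!)^ν`. -/
noncomputable def cmpZ (lam nu : ℝ) : ℝ := ∑' i : ℕ, lam ^ i / (i.factorial : ℝ) ^ nu

/-- The first eight coefficients `c₀,…,c₇` in the asymptotic expansion of `Z(λ,ν)`. -/
noncomputable def cmpCoeff (ν : ℝ) : ℕ → ℝ
  | 0 => 1
  | 1 => (ν ^ 2 - 1) / 24
  | 2 => (ν ^ 2 - 1) * (ν ^ 2 + 23) / 1152
  | 3 => (ν ^ 2 - 1) * (5 * ν ^ 4 - 298 * ν ^ 2 + 11237) / 414720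
  | 4 => (ν ^ 2 - 1) * (5 * ν ^ 6 - 1887 * ν ^ 4 - 241041 * ν ^ 2 + 2482411) / 39813120
  | 5 => (ν ^ 2 - 1) *
      (7 * ν ^ 8 - 7420 * ν ^ 6 + 1451274 * ν ^ 4 - 220083004 * ν ^ 2 + 1363929895) /
      6688604160
  | 6 => (ν ^ 2 - 1) *
      (35 * ν ^ 10 - 78295 * ν ^ 8 + 76299326 * ν ^ 6 + 25171388146 * ν ^ 4 -
        915974552561 * ν ^ 2 + 4175309343349) / 4815794995200
  | 7 => (ν ^ 2 - 1) *
      (5 * ν ^ 12 - 20190 * ν ^ 10 + 45700491 * ν ^ 8 - 19956117988 * ν ^ 6 +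
        7134232164555 * ν ^ 4 - 142838662997982 * ν ^ 2 + 525035501918789) /
      115579079884800
  | _ => 0

/-!
Stirling's series turns `1 / (i !) ^ ν` into an inverse factorial series: a constant times
`ν ^ (ν * (i + 1 / 2)) * ∑ k, c k / Γ (ν * i + (1 + ν) / 2 + k)`. With `x = ν * λ ^ (1 / ν)` the
`k`-th part contributes `x ^ (-k)` times a sum over `t ∈ (1 + ν) / 2 + k + ν ℕ` of the Poisson
weights `exp (-x) * x ^ (t - 1) / Γ t`. Multiplied by `ν`, this is a Riemann sum of the weights.
They are entire in `t`, negligible for `t` below `√x`, and beyond that bounded by their real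
values on discs of radius `x ^ (1 / 4)`, so the error of the Riemann sum is beyond all orders in
`1 / x`, whatever the step `ν`. For `ν = 1` the sum is the Poisson normalisation `1`, which
evaluates the common integral, and `Z (λ, ν)` inherits the coefficients `c k`.
-/

open Filter Topology Asymptotics MeasureTheory

theorem isBigO_log_one_sub_add_sum (n : ℕ) :
    (fun q : ℝ => Real.log (1 - q) + ∑ i ∈ Finset.range n, q ^ (i + 1) / (i + 1))
      =O[𝓝 0] fun q => q ^ (n + 1) := by
  refine IsBigO.of_bound 2 ?_
  filter_upwards [Metric.ball_mem_nhds (0 : ℝ) one_half_pos] with q hq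
  rw [Metric.mem_ball, dist_zero_right, Real.norm_eq_abs] at hq
  rw [add_comm, norm_pow, Real.norm_eq_abs, Real.norm_eq_abs]
  refine (Real.abs_log_sub_add_sum_range_le (hq.trans one_half_lt_one) n).trans ?_
  rw [div_le_iff₀ (by linarith), mul_right_comm]
  exact le_mul_of_one_le_left (by positivity) (by linarith)

theorem isBigO_log_one_add_sub_sum (n : ℕ) :
    (fun q : ℝ => Real.log (1 + q) - ∑ i ∈ Finset.range n, (-1) ^ i * q ^ (i + 1) / (i + 1))
      =O[𝓝 0] fun q => q ^ (n + 1) := by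
  have hneg : Tendsto (fun q : ℝ => -q) (𝓝 0) (𝓝 0) := by simpa using tendsto_neg (0 : ℝ)
  refine (((isBigO_log_one_sub_add_sum n).comp_tendsto hneg).congr_left fun q => ?_).trans
    (isBigO_of_le _ fun q => by simp)
  have hterm (i : ℕ) : (-q) ^ (i + 1) / (i + 1) = -((-1) ^ i * q ^ (i + 1) / (i + 1)) := by
    rw [neg_pow]; ring
  simp only [Function.comp_apply, sub_neg_eq_add, hterm, Finset.sum_neg_distrib, ← sub_eq_add_neg]

theorem inv_pow_succ_le_inv_pow_sub_inv_pow {p : ℕ} (hp : p ≠ 0) {u : ℝ} (hu : 1 ≤ u) :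
    (u ^ (p + 1))⁻¹ ≤ 2 ^ p * ((u ^ p)⁻¹ - ((u + 1) ^ p)⁻¹) := by
  obtain ⟨m, rfl⟩ := Nat.exists_eq_succ_of_ne_zero hp
  have hgrowth : u ^ m ≤ (u + 1) ^ (m + 1) - u ^ (m + 1) := by
    have : u ^ m ≤ (u + 1) ^ m := by gcongr; linarith
    rw [pow_succ, pow_succ]
    nlinarith
  have hdouble : (u + 1) ^ (m + 1) ≤ 2 ^ (m + 1) * u ^ (m + 1) := by
    rw [← mul_pow]; gcongr; linarith
  rw [inv_sub_inv (by positivity) (by positivity), ← mul_div_assoc, inv_eq_one_div,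
    div_le_div_iff₀ (by positivity) (by positivity)]
  calc 1 * (u ^ (m + 1) * (u + 1) ^ (m + 1))
      ≤ 1 * (u ^ (m + 1) * (2 ^ (m + 1) * u ^ (m + 1))) := by gcongr
    _ = 2 ^ (m + 1) * u ^ m * u ^ (m + 1 + 1) := by ring
    _ ≤ 2 ^ (m + 1) * ((u + 1) ^ (m + 1) - u ^ (m + 1)) * u ^ (m + 1 + 1) := by gcongr

theorem isBigO_inv_pow_of_sub_isBigO {E : Type*} [NormedAddCommGroup E] {g : ℝ → E} {p : ℕ}
    (hp : p ≠ 0) (hstep : (fun u => g (u + 1) - g u) =O[atTop] fun u : ℝ => (u ^ (p + 1))⁻¹)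
    (hlim : ∀ᶠ u in atTop, Tendsto (fun n : ℕ => g (u + n)) atTop (𝓝 0)) :
    g =O[atTop] fun u : ℝ => (u ^ p)⁻¹ := by
  obtain ⟨C, hC, hbound⟩ := hstep.exists_pos
  obtain ⟨U, hU⟩ := eventually_atTop.1 hbound.bound
  refine IsBigO.of_bound (C * 2 ^ p) ?_
  filter_upwards [hlim, eventually_ge_atTop U, eventually_ge_atTop 1] with u hlim hUu hu
  have htelescope (n : ℕ) :
      ‖g (u + n) - g u‖ ≤ C * 2 ^ p * ((u ^ p)⁻¹ - ((u + n) ^ p)⁻¹) := by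
    induction n with
    | zero => simp
    | succ n ih =>
      have hun : u ≤ u + n := le_add_of_nonneg_right n.cast_nonneg
      have hincr := hU (u + n) (hUu.trans hun)
      rw [norm_inv, norm_pow, Real.norm_of_nonneg (by positivity)] at hincr
      have hinv := mul_le_mul_of_nonneg_left
        (inv_pow_succ_le_inv_pow_sub_inv_pow hp (hu.trans hun)) hC.le
      have htri := norm_sub_le_norm_sub_add_norm_sub (g (u + n + 1)) (g (u + n)) (g u)
      rw [Nat.cast_succ, ← add_assoc]
      linarith
  have hnorm : Tendsto (fun n : ℕ => ‖g (u + n) - g u‖) atTop (𝓝 ‖g u‖) := by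
    simpa using (hlim.sub_const (g u)).norm
  rw [norm_inv, norm_pow, Real.norm_of_nonneg (by positivity)]
  refine le_of_tendsto' hnorm fun n => (htelescope n).trans ?_
  gcongr
  exact sub_le_self _ (by positivity)

/-- The coefficients `B_{k+1}(1/2) / (k (k+1))` of `u ^ (-k)`, `k < 8`, in the asymptotic series of
`log Γ(u + 1/2)`; only the odd ones are nonzero. -/
noncomputable def stirlingCoeff : ℕ → ℝ
  | 1 => -1 / 24
  | 3 => 7 / 2880
  | 5 => -31 / 40320
  | 7 => 127 / 215040
  | _ => 0

/-- The error made in replacing `log Γ(u + 1/2)` by its Stirling series up to `u ^ (-7)`. Centring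
the series at `u + 1/2` removes the terms of even order. -/
noncomputable def stirlingRemainder (u : ℝ) : ℝ :=
  Real.log (Real.Gamma (u + 1 / 2)) - (u * Real.log u - u + Real.log (2 * Real.pi) / 2 +
    ∑ k ∈ Finset.range 8, stirlingCoeff k * (u ^ k)⁻¹)

/-- The increment `stirlingRemainder (u + 1) - stirlingRemainder u` as a function of
`q = 1 / (2 * u + 1)`, for which `u = (1 - q) / (2 * q)` and `u + 1 = (1 + q) / (2 * q)`. -/
noncomputable def stirlingIncrement (q : ℝ) : ℝ :=
  1 - (2 * q)⁻¹ * ((1 + q) * Real.log (1 + q) - (1 - q) * Real.log (1 - q)) -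
    ∑ k ∈ Finset.range 8, stirlingCoeff k * (2 * q) ^ k * (((1 + q) ^ k)⁻¹ - ((1 - q) ^ k)⁻¹)

theorem stirlingRemainder_add_one_sub {u : ℝ} (hu : 0 < u) :
    stirlingRemainder (u + 1) - stirlingRemainder u = stirlingIncrement (2 * u + 1)⁻¹ := by
  obtain ⟨v, hv⟩ : ∃ v, v = u + 1 / 2 := ⟨_, rfl⟩
  have hv0 : 0 < v := by linarith
  obtain ⟨q, hq⟩ : ∃ q, q = (2 * u + 1)⁻¹ := ⟨_, rfl⟩
  have hq0 : 0 < q := by rw [hq]; positivity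
  have hq1 : q < 1 := by rw [hq]; exact inv_lt_one_of_one_lt₀ (by linarith)
  have hvq : (2 * q)⁻¹ = v := by rw [hq, hv]; field_simp
  have hsub : u = v * (1 - q) := by rw [← hvq, hq]; field_simp; ring
  have hadd : u + 1 = v * (1 + q) := by rw [← hvq, hq]; field_simp; ring
  have hGamma : Real.log (Real.Gamma (u + 1 + 1 / 2)) =
      Real.log (Real.Gamma (u + 1 / 2)) + Real.log v := by
    rw [show u + 1 + 1 / 2 = v + 1 by linarith, ← hv, Real.Gamma_add_one hv0.ne',
      Real.log_mul hv0.ne' (Real.Gamma_pos_of_pos hv0).ne', add_comm]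
  have hlog_sub : Real.log u = Real.log v + Real.log (1 - q) := by
    rw [hsub, Real.log_mul hv0.ne' (by linarith)]
  have hlog_add : Real.log (u + 1) = Real.log v + Real.log (1 + q) := by
    rw [hadd, Real.log_mul hv0.ne' (by linarith)]
  have hpow (k : ℕ) : stirlingCoeff k * ((u + 1) ^ k)⁻¹ - stirlingCoeff k * (u ^ k)⁻¹ =
      stirlingCoeff k * (2 * q) ^ k * (((1 + q) ^ k)⁻¹ - ((1 - q) ^ k)⁻¹) := by
    rw [hadd, hsub, ← hvq]
    simp only [mul_pow, mul_inv, inv_pow, inv_inv]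
    ring
  rw [← hq]
  unfold stirlingRemainder stirlingIncrement
  rw [← Finset.sum_congr rfl fun k _ => hpow k, Finset.sum_sub_distrib, hGamma, hlog_sub, hlog_add,
    hvq]
  linear_combination (- Real.log (1 + q)) * hadd + Real.log (1 - q) * hsub

/-- The polynomial left over when the logarithms in `stirlingIncrement q` are replaced by their
Taylor polynomials of degree nine and the denominators are cleared. -/
noncomputable def stirlingIncrementNumerator (q : ℝ) : ℝ :=
  116 / 15 + 457 / 315 * q ^ 2 + 46 / 105 * q ^ 4 + 61 / 360 * q ^ 6 - 7 / 40 * q ^ 8 +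
    37 / 504 * q ^ 10 - 1 / 72 * q ^ 12

theorem stirlingIncrement_eq {q : ℝ} (h0 : q ≠ 0) (h1 : 1 + q ≠ 0) (h2 : 1 - q ≠ 0) :
    stirlingIncrement q =
      q ^ 10 * (stirlingIncrementNumerator q / ((1 + q) ^ 7 * (1 - q) ^ 7)) -
        (2 * q)⁻¹ * ((1 + q) * (Real.log (1 + q) -
            ∑ i ∈ Finset.range 9, (-1) ^ i * q ^ (i + 1) / (i + 1)) -
          (1 - q) * (Real.log (1 - q) + ∑ i ∈ Finset.range 9, q ^ (i + 1) / (i + 1))) := by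
  simp only [stirlingIncrement, stirlingIncrementNumerator, stirlingCoeff, Finset.sum_range_succ,
    Finset.sum_range_zero]
  norm_num only
  field_simp
  ring

theorem isBigO_stirlingIncrement :
    stirlingIncrement =O[𝓝[>] 0] fun q => q ^ 9 := by
  have hrational : (fun q : ℝ => q ^ 10 *
      (stirlingIncrementNumerator q / ((1 + q) ^ 7 * (1 - q) ^ 7))) =O[𝓝 0] fun q => q ^ 9 := by
    have hcont : ContinuousAt
        (fun q : ℝ => q * (stirlingIncrementNumerator q / ((1 + q) ^ 7 * (1 - q) ^ 7))) 0 := by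
      unfold stirlingIncrementNumerator
      fun_prop (disch := norm_num)
    refine ((isBigO_refl (fun q : ℝ => q ^ 9) _).mul (hcont.isBigO_one ℝ)).congr (fun q => ?_)
      fun q => mul_one _
    ring
  have hadd : (fun q : ℝ => 1 + q) =O[𝓝 0] fun _ => (1 : ℝ) :=
    (ContinuousAt.tendsto (by fun_prop)).isBigO_one ℝ
  have hsub : (fun q : ℝ => 1 - q) =O[𝓝 0] fun _ => (1 : ℝ) :=
    (ContinuousAt.tendsto (by fun_prop)).isBigO_one ℝ
  have hlog := ((hadd.mul (isBigO_log_one_add_sub_sum 9)).sub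
    (hsub.mul (isBigO_log_one_sub_add_sum 9))).mono (nhdsWithin_le_nhds (s := Set.Ioi 0))
  have hinv : (fun q : ℝ => (2 * q)⁻¹) =O[𝓝[>] 0] fun q => q⁻¹ :=
    ((isBigO_refl (fun q : ℝ => q⁻¹) _).const_mul_left 2⁻¹).congr_left fun q => (mul_inv 2 q).symm
  have hquotient := (hinv.mul hlog).congr' EventuallyEq.rfl
    (g₂ := fun q : ℝ => q ^ 9) (by
      filter_upwards [self_mem_nhdsWithin] with q (hq : 0 < q)
      field_simp)
  refine ((hrational.mono nhdsWithin_le_nhds).sub hquotient).congr' ?_ EventuallyEq.rfl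
  filter_upwards [Ioo_mem_nhdsGT one_pos] with q hq
  exact (stirlingIncrement_eq hq.1.ne' (by linarith [hq.1]) (by linarith [hq.2])).symm

theorem isBigO_stirlingRemainder_add_one_sub :
    (fun u => stirlingRemainder (u + 1) - stirlingRemainder u) =O[atTop] fun u => (u ^ 9)⁻¹ := by
  have hlin : Tendsto (fun u : ℝ => 2 * u + 1) atTop atTop :=
    tendsto_atTop_add_const_right _ _ (tendsto_id.const_mul_atTop two_pos)
  have hq : Tendsto (fun u : ℝ => (2 * u + 1)⁻¹) atTop (𝓝[>] 0) :=
    tendsto_inv_atTop_nhdsGT_zero.comp hlin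
  refine ((isBigO_stirlingIncrement.comp_tendsto hq).congr' ?_ EventuallyEq.rfl).trans ?_
  · filter_upwards [eventually_gt_atTop 0] with u hu
    exact (stirlingRemainder_add_one_sub hu).symm
  · refine IsBigO.of_bound 1 ?_
    filter_upwards [eventually_gt_atTop 0] with u hu
    rw [Function.comp_apply, one_mul, Real.norm_of_nonneg (by positivity),
      Real.norm_of_nonneg (by positivity), inv_pow]
    gcongr
    linarith

theorem log_Gamma_add_nat {s : ℝ} (hs : 0 < s) (n : ℕ) :
    Real.log (Real.Gamma (s + n)) =
      Real.log (Real.Gamma s) + ∑ j ∈ Finset.range n, Real.log (s + j) :=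
  Real.BohrMollerup.f_add_nat_eq (f := Real.log ∘ Real.Gamma)
    (fun {y} hy => by
      rw [Function.comp_apply, Function.comp_apply, Real.Gamma_add_one hy.ne',
        Real.log_mul hy.ne' (Real.Gamma_pos_of_pos hy).ne', add_comm]) hs n

theorem stirlingRemainder_add_nat_eq {u : ℝ} (hu : 1 / 2 < u) {n : ℕ} (hn : n ≠ 0) :
    stirlingRemainder (u + n) =
      (Real.log (Real.Gamma (u - 1 / 2)) - Real.BohrMollerup.logGammaSeq (u - 1 / 2) n) +
        (Real.log (Stirling.stirlingSeq n) - Real.log √Real.pi) +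
        (u - n * Real.log (1 + u / n)) - u * Real.log (1 + u / n) -
        ∑ k ∈ Finset.range 8, stirlingCoeff k * ((u + n) ^ k)⁻¹ := by
  have hn0 : (0 : ℝ) < n := by positivity
  have hlog : Real.log (u + n) = Real.log n + Real.log (1 + u / n) := by
    rw [← Real.log_mul hn0.ne' (by positivity)]
    congr 1
    field_simp
    ring
  have hGamma := log_Gamma_add_nat (by linarith : 0 < u - 1 / 2) (n + 1)
  rw [show u - 1 / 2 + (n + 1 : ℕ) = u + n + 1 / 2 by push_cast; ring] at hGamma
  have hstirling := Stirling.log_stirlingSeq_formula n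
  rw [Real.log_mul two_ne_zero hn0.ne', Real.log_div hn0.ne' (Real.exp_ne_zero _),
    Real.log_exp] at hstirling
  rw [stirlingRemainder, hGamma, hlog, hstirling, Real.log_sqrt Real.pi_pos.le,
    Real.log_mul two_ne_zero Real.pi_pos.ne', Real.BohrMollerup.logGammaSeq]
  ring

theorem tendsto_stirlingRemainder_add_nat {u : ℝ} (hu : 1 / 2 < u) :
    Tendsto (fun n : ℕ => stirlingRemainder (u + n)) atTop (𝓝 0) := by
  have hnat : Tendsto (fun n : ℕ => (n : ℝ)) atTop atTop := tendsto_natCast_atTop_atTop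
  have hGamma := (Real.BohrMollerup.tendsto_log_gamma (by linarith : 0 < u - 1 / 2)).const_sub
    (Real.log (Real.Gamma (u - 1 / 2)))
  have hstirling := (Stirling.tendsto_stirlingSeq_sqrt_pi.log (by positivity)).sub_const
    (Real.log √Real.pi)
  have hexp := ((Real.tendsto_mul_log_one_add_div_atTop u).comp hnat).const_sub u
  have hlog : Tendsto (fun n : ℕ => u * Real.log (1 + u / n)) atTop (𝓝 0) := by
    simpa using (((tendsto_const_div_atTop_nhds_zero_nat u).const_add 1).log
      (by norm_num)).const_mul u
  have hseries : Tendsto (fun n : ℕ => ∑ k ∈ Finset.range 8, stirlingCoeff k * ((u + n) ^ k)⁻¹)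
      atTop (𝓝 0) := by
    rw [← Finset.sum_const_zero (s := Finset.range 8)]
    refine tendsto_finsetSum _ fun k _ => ?_
    rcases eq_or_ne k 0 with rfl | hk
    · simp [stirlingCoeff]
    · simpa using ((tendsto_pow_atTop hk).comp
        (tendsto_atTop_add_const_left _ u hnat)).inv_tendsto_atTop.const_mul (stirlingCoeff k)
  have hsum := (((hGamma.add hstirling).add hexp).sub hlog).sub hseries
  simp only [sub_self, add_zero] at hsum
  refine hsum.congr' ?_
  filter_upwards [eventually_ne_atTop 0] with n hn
  exact (stirlingRemainder_add_nat_eq hu hn).symm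

theorem isBigO_stirlingRemainder : stirlingRemainder =O[atTop] fun u => (u ^ 8)⁻¹ :=
  isBigO_inv_pow_of_sub_isBigO (by norm_num) isBigO_stirlingRemainder_add_one_sub <|
    (eventually_gt_atTop (1 / 2)).mono fun _ => tendsto_stirlingRemainder_add_nat

theorem norm_add_mul_I_le_mul_exp {s : ℝ} (hs : 1 < s) (y : ℝ) :
    ‖(s + y * Complex.I : ℂ)‖ ≤ s * Real.exp (y ^ 2 / 2 * (1 / (s - 1) - 1 / s)) := by
  have hs1 : 0 < s - 1 := sub_pos.2 hs
  have hs0 : 0 < s := one_pos.trans hs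
  refine le_of_sq_le_sq ?_ (by positivity)
  calc ‖(s + y * Complex.I : ℂ)‖ ^ 2
      = s ^ 2 * (y ^ 2 / s ^ 2 + 1) := by
        rw [Complex.sq_norm, Complex.normSq_add_mul_I]; field_simp; ring
    _ ≤ s ^ 2 * (y ^ 2 * (1 / (s - 1) - 1 / s) + 1) := by
        rw [div_sub_div _ _ hs1.ne' hs0.ne', div_eq_mul_one_div (y ^ 2)]
        gcongr <;> nlinarith
    _ ≤ s ^ 2 * Real.exp (y ^ 2 * (1 / (s - 1) - 1 / s)) := by
        gcongr; exact Real.add_one_le_exp _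
    _ = (s * Real.exp (y ^ 2 / 2 * (1 / (s - 1) - 1 / s))) ^ 2 := by
        rw [mul_pow, ← Real.exp_nat_mul]; congr 2; push_cast; ring

theorem prod_norm_add_mul_I_le {t : ℝ} (ht : 1 < t) (y : ℝ) (n : ℕ) :
    ∏ j ∈ Finset.range n, ‖(t + y * Complex.I + j : ℂ)‖ ≤
      (∏ j ∈ Finset.range n, (t + j)) * Real.exp (y ^ 2 / (2 * (t - 1))) := by
  have hpos (j : ℕ) : 0 < t + j := by positivity
  have hfactor (j : ℕ) : ‖(t + y * Complex.I + j : ℂ)‖ ≤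
      (t + j) * Real.exp (y ^ 2 / 2 * (1 / (t + j - 1) - 1 / (t + (j + 1 : ℕ) - 1))) := by
    have h := norm_add_mul_I_le_mul_exp
      (ht.trans_le (le_add_of_nonneg_right j.cast_nonneg) : 1 < t + (j : ℝ)) y
    rw [Complex.ofReal_add, Complex.ofReal_natCast, add_right_comm] at h
    rwa [show t + (j + 1 : ℕ) - 1 = t + j by push_cast; ring]
  calc ∏ j ∈ Finset.range n, ‖(t + y * Complex.I + j : ℂ)‖
      ≤ ∏ j ∈ Finset.range n,
        (t + j) * Real.exp (y ^ 2 / 2 * (1 / (t + j - 1) - 1 / (t + (j + 1 : ℕ) - 1))) :=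
        Finset.prod_le_prod (fun _ _ => norm_nonneg _) fun j _ => hfactor j
    _ = (∏ j ∈ Finset.range n, (t + j)) *
        Real.exp (y ^ 2 / 2 * (1 / (t - 1) - 1 / (t + n - 1))) := by
        rw [Finset.prod_mul_distrib, ← Real.exp_sum, ← Finset.mul_sum,
          Finset.sum_range_sub' (fun j : ℕ => 1 / (t + j - 1)), Nat.cast_zero, add_zero]
    _ ≤ (∏ j ∈ Finset.range n, (t + j)) * Real.exp (y ^ 2 / 2 * (1 / (t - 1))) := by
        have : 0 ≤ ∏ j ∈ Finset.range n, (t + j) := Finset.prod_nonneg fun j _ => (hpos j).le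
        have hn : 0 ≤ 1 / (t + n - 1) :=
          one_div_nonneg.2 (by linarith [(Nat.cast_nonneg n : (0 : ℝ) ≤ n)])
        gcongr
        exact sub_le_self _ hn
    _ = _ := by rw [div_mul_div_comm, mul_one]

theorem Gamma_le_norm_Gamma_add_mul_I {t : ℝ} (ht : 1 < t) (y : ℝ) :
    Real.Gamma t ≤ ‖Complex.Gamma (t + y * Complex.I)‖ * Real.exp (y ^ 2 / (2 * (t - 1))) := by
  have : 0 < t := one_pos.trans ht
  refine le_of_tendsto_of_tendsto (Real.GammaSeq_tendsto_Gamma t)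
    ((Complex.GammaSeq_tendsto_Gamma (t + y * Complex.I)).norm.mul_const _) ?_
  filter_upwards [eventually_gt_atTop 0] with n hn
  have hnorm : ‖Complex.GammaSeq (t + y * Complex.I) n‖ =
      (n : ℝ) ^ t * n.factorial / ∏ j ∈ Finset.range (n + 1), ‖(t + y * Complex.I + j : ℂ)‖ := by
    rw [Complex.GammaSeq, norm_div, norm_mul, norm_prod, Complex.norm_natCast_cpow_of_pos hn]
    simp
  have hfactor (j : ℕ) : 0 < ‖(t + y * Complex.I + j : ℂ)‖ := by
    refine norm_pos_iff.2 fun h => (by positivity : t + j ≠ 0) ?_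
    simpa using congrArg Complex.re h
  rw [hnorm, Real.GammaSeq, div_mul_eq_mul_div,
    div_le_div_iff₀ (Finset.prod_pos fun j _ => by positivity)
      (Finset.prod_pos fun j _ => hfactor j), mul_assoc _ (Real.exp _), mul_comm (Real.exp _)]
  gcongr
  exact prod_norm_add_mul_I_le ht y (n + 1)

/-- The gamma density of shape `t` at `x`. As a function of the integers `t - 1 = i` it is the
Poisson distribution of mean `x`; here it is the summand, at real `t`, of the Mittag-Leffler
sums. -/
noncomputable def poissonWeight (x t : ℝ) : ℝ :=
  Real.exp (-x) * x ^ (t - 1) * (Real.Gamma t)⁻¹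

/-- The extension of `poissonWeight x` to an entire function, used for Cauchy estimates. -/
noncomputable def complexPoissonWeight (x : ℝ) (z : ℂ) : ℂ :=
  Complex.exp (-x) * (x : ℂ) ^ (z - 1) * (Complex.Gamma z)⁻¹

/-- The `k`-th derivative of `poissonWeight x`. -/
noncomputable def poissonWeightDeriv (x : ℝ) (k : ℕ) (t : ℝ) : ℝ :=
  (iteratedDeriv k (complexPoissonWeight x) t).re

section PoissonWeight

variable {x t : ℝ}

theorem poissonWeight_pos (hx : 0 < x) (ht : 0 < t) : 0 < poissonWeight x t := by
  have := Real.Gamma_pos_of_pos ht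
  unfold poissonWeight
  positivity

theorem poissonWeight_eq_mul_prod (hx : 0 < x) (ht : 0 < t) (m : ℕ) :
    poissonWeight x t = poissonWeight x (t + m) * ∏ j ∈ Finset.range m, (t + j) / x := by
  induction m with
  | zero => simp
  | succ m ih =>
    have htm : 0 < t + m := by positivity
    have hGamma := (Real.Gamma_pos_of_pos htm).ne'
    rw [ih, Finset.prod_range_succ, Nat.cast_succ, ← add_assoc, poissonWeight, poissonWeight,
      Real.Gamma_add_one htm.ne', add_sub_right_comm (t + m) 1 1, Real.rpow_add_one hx.ne']
    field_simp

theorem exp_mul_rpow_le_Gamma (hx : 0 < x) (ht : 1 ≤ t) :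
    Real.exp (-(x + 1)) * x ^ (t - 1) ≤ Real.Gamma t := by
  have ht0 : 0 < t := one_pos.trans_le ht
  have hint := Real.GammaIntegral_convergent ht0
  have hsub : Set.Ioc x (x + 1) ⊆ Set.Ioi 0 := fun s hs => hx.trans hs.1
  rw [Real.Gamma_eq_integral ht0]
  calc Real.exp (-(x + 1)) * x ^ (t - 1)
      = ∫ _ in Set.Ioc x (x + 1), Real.exp (-(x + 1)) * x ^ (t - 1) := by simp
    _ ≤ ∫ s in Set.Ioc x (x + 1), Real.exp (-s) * s ^ (t - 1) := by
        refine setIntegral_mono_on continuous_const.integrableOn_Ioc (hint.mono_set hsub)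
          measurableSet_Ioc fun s hs => ?_
        have htop : s ≤ x + 1 := hs.2
        have hbot : x ≤ s := hs.1.le
        have : 0 ≤ t - 1 := sub_nonneg.2 ht
        gcongr
    _ ≤ ∫ s in Set.Ioi 0, Real.exp (-s) * s ^ (t - 1) := by
        refine setIntegral_mono_set hint ?_ (Eventually.of_forall hsub)
        filter_upwards [ae_restrict_mem measurableSet_Ioi] with s (hs : 0 < s)
        simp only [Pi.zero_apply]
        positivity

theorem poissonWeight_le_three (hx : 0 < x) (ht : 1 ≤ t) : poissonWeight x t ≤ 3 := by
  have hGamma := Real.Gamma_pos_of_pos (one_pos.trans_le ht)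
  rw [poissonWeight, ← div_eq_mul_inv, div_le_iff₀ hGamma]
  calc Real.exp (-x) * x ^ (t - 1) = Real.exp 1 * (Real.exp (-(x + 1)) * x ^ (t - 1)) := by
        rw [← mul_assoc, ← Real.exp_add]; ring_nf
    _ ≤ 3 * Real.Gamma t := by
        gcongr
        · exact Real.exp_one_lt_three.le
        · exact exp_mul_rpow_le_Gamma hx ht

theorem poissonWeight_le_inv_sq (hx : 0 < x) (ht : 3 ≤ t) :
    poissonWeight x t ≤ 3 * x ^ 2 / (t - 2) ^ 2 := by
  have ht2 : 0 < t - 2 := by linarith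
  have hpos := poissonWeight_pos hx (by linarith : 0 < t)
  have hrec := poissonWeight_eq_mul_prod hx ht2 2
  have hle := poissonWeight_le_three hx (by linarith : 1 ≤ t - 2)
  simp only [hrec, Finset.prod_range_succ, Finset.prod_range_zero, one_mul, Nat.cast_zero,
    Nat.cast_one, Nat.cast_ofNat, add_zero, sub_add_cancel] at hle
  rw [le_div_iff₀ (by positivity)]
  calc poissonWeight x t * (t - 2) ^ 2
      ≤ poissonWeight x t * ((t - 2) * (t - 2 + 1)) := by gcongr; nlinarith
    _ = poissonWeight x t * ((t - 2) / x * ((t - 2 + 1) / x)) * x ^ 2 := by field_simp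
    _ ≤ 3 * x ^ 2 := by gcongr

theorem poissonWeight_le_div_pow (hx : 0 < x) (ht : 0 < t) {m : ℕ} (hm : m ≠ 0) :
    poissonWeight x t ≤ 3 * ((t + m) / x) ^ m := by
  rw [poissonWeight_eq_mul_prod hx ht m]
  have hm1 : (1 : ℝ) ≤ m := Nat.one_le_cast.2 (Nat.one_le_iff_ne_zero.2 hm)
  refine mul_le_mul (poissonWeight_le_three hx (by linarith)) ?_
    (Finset.prod_nonneg fun j _ => by positivity) zero_le_three
  refine (Finset.prod_le_prod (fun j _ => by positivity)
    (g := fun _ => (t + m) / x) fun j hj => ?_).trans_eq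
      (by rw [Finset.prod_const, Finset.card_range])
  have : (j : ℝ) ≤ m := Nat.cast_le.2 (Finset.mem_range.1 hj).le
  gcongr

theorem poissonWeight_pow_four_le {y : ℝ} (hy : 1 ≤ y) (ht : 0 < t) (hty : t ≤ 4 * y ^ 2) {m : ℕ}
    (hm : m ≠ 0) : poissonWeight (y ^ 4) t ≤ 3 * (4 + m) ^ m / y ^ (2 * m) := by
  have : 0 < y := one_pos.trans_le hy
  refine (poissonWeight_le_div_pow (by positivity) ht hm).trans ?_
  rw [mul_div_assoc, pow_mul, ← div_pow]
  gcongr 3 * ?_ ^ m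
  rw [div_le_div_iff₀ (by positivity) (by positivity)]
  have : (m : ℝ) ≤ m * y ^ 2 := le_mul_of_one_le_right m.cast_nonneg (one_le_pow₀ hy)
  calc (t + m) * y ^ 2 ≤ (4 * y ^ 2 + m * y ^ 2) * y ^ 2 := by gcongr
    _ = (4 + m) * y ^ 4 := by ring

theorem complexPoissonWeight_ofReal (hx : 0 ≤ x) (t : ℝ) :
    complexPoissonWeight x t = (poissonWeight x t : ℝ) := by
  simp only [complexPoissonWeight, poissonWeight, Complex.Gamma_ofReal, Complex.ofReal_mul,
    Complex.ofReal_inv, Complex.ofReal_exp, Complex.ofReal_neg, Complex.ofReal_cpow hx,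
    Complex.ofReal_sub, Complex.ofReal_one]

theorem differentiable_complexPoissonWeight (hx : x ≠ 0) :
    Differentiable ℂ (complexPoissonWeight x) := by
  refine ((differentiable_const _).mul fun z => ?_).mul Complex.differentiable_one_div_Gamma
  exact DifferentiableAt.const_cpow (by fun_prop) (Or.inl (Complex.ofReal_ne_zero.2 hx))

theorem norm_complexPoissonWeight_le (hx : 0 < x) {z : ℂ} (hz : 1 < z.re) :
    ‖complexPoissonWeight x z‖ ≤
      poissonWeight x z.re * Real.exp (z.im ^ 2 / (2 * (z.re - 1))) := by
  have hGamma := Gamma_le_norm_Gamma_add_mul_I hz z.im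
  rw [Complex.re_add_im] at hGamma
  have hreal : 0 < Real.Gamma z.re := Real.Gamma_pos_of_pos (by linarith)
  have hcomplex : 0 < ‖Complex.Gamma z‖ :=
    norm_pos_iff.2 (Complex.Gamma_ne_zero_of_re_pos (by linarith))
  rw [complexPoissonWeight, poissonWeight, norm_mul, norm_mul, norm_inv,
    Complex.norm_cpow_eq_rpow_re_of_pos hx, Complex.norm_exp, mul_assoc _ (Real.Gamma z.re)⁻¹]
  simp only [Complex.neg_re, Complex.ofReal_re, Complex.sub_re, Complex.one_re]
  gcongr
  rw [inv_mul_eq_div, inv_eq_one_div, div_le_div_iff₀ hcomplex hreal]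
  linarith

theorem poissonWeightDeriv_zero (hx : 0 ≤ x) : poissonWeightDeriv x 0 = poissonWeight x := by
  funext t
  rw [poissonWeightDeriv, iteratedDeriv_zero, complexPoissonWeight_ofReal hx, Complex.ofReal_re]

theorem hasDerivAt_poissonWeightDeriv (hx : x ≠ 0) (k : ℕ) (t : ℝ) :
    HasDerivAt (poissonWeightDeriv x k) (poissonWeightDeriv x (k + 1) t) t := by
  have hsmooth : ContDiff ℂ (k + 1 : ℕ) (complexPoissonWeight x) :=
    (differentiable_complexPoissonWeight hx).contDiff
  have hdiff := hsmooth.differentiable_iteratedDeriv k (Nat.cast_lt.2 k.lt_succ_self)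
  have h := (hdiff t).hasDerivAt.real_of_complex
  rwa [← iteratedDeriv_succ] at h

theorem abs_poissonWeightDeriv_le (hx : 0 < x) {r M : ℝ} (hr : 0 < r) (ht : r + 1 + r ^ 2 / 2 ≤ t)
    (hM : ∀ τ ∈ Set.Icc (t - r) (t + r), poissonWeight x τ ≤ M) (k : ℕ) :
    |poissonWeightDeriv x k t| ≤ k.factorial * (3 * M) / r ^ k := by
  refine (Complex.abs_re_le_norm _).trans <|
    Complex.norm_iteratedDeriv_le_of_forall_mem_sphere_norm_le k hr
      (differentiable_complexPoissonWeight hx.ne').diffContOnCl fun z hz => ?_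
  rw [mem_sphere_iff_norm] at hz
  have hre := (Complex.abs_re_le_norm (z - t)).trans_eq hz
  have him := (Complex.abs_im_le_norm (z - t)).trans_eq hz
  rw [Complex.sub_re, Complex.ofReal_re, abs_le] at hre
  rw [Complex.sub_im, Complex.ofReal_im, sub_zero] at him
  have hr2 : 0 < r ^ 2 := by positivity
  have : r ^ 2 / 2 ≤ z.re - 1 := by linarith
  have hexp : Real.exp (z.im ^ 2 / (2 * (z.re - 1))) ≤ 3 := by
    refine (Real.exp_le_exp.2 ?_).trans Real.exp_one_lt_three.le
    rw [div_le_one (by linarith)]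
    linarith [sq_le_sq.2 (him.trans (le_abs_self r))]
  calc ‖complexPoissonWeight x z‖
      ≤ poissonWeight x z.re * Real.exp (z.im ^ 2 / (2 * (z.re - 1))) :=
        norm_complexPoissonWeight_le hx (by linarith)
    _ ≤ M * 3 := by
        have hle := hM z.re ⟨by linarith, by linarith⟩
        have hM0 : 0 ≤ M := (poissonWeight_pos hx (by linarith)).le.trans hle
        gcongr
    _ = 3 * M := mul_comm _ _

theorem continuous_poissonWeight (hx : 0 < x) : Continuous (poissonWeight x) := by
  rw [← poissonWeightDeriv_zero hx.le]
  exact continuous_iff_continuousAt.2 fun t =>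
    (hasDerivAt_poissonWeightDeriv hx.ne' 0 t).continuousAt

theorem integrableOn_poissonWeight (hx : 0 < x) (a : ℝ) :
    IntegrableOn (poissonWeight x) (Set.Ioi a) := by
  have hcont := continuous_poissonWeight hx
  have hsq : IntegrableOn (fun t : ℝ => 3 * x ^ 2 * (t + (-2)) ^ (-2 : ℝ)) (Set.Ioi 3) :=
    (integrableOn_add_rpow_Ioi_of_lt (by norm_num) (by norm_num)).const_mul _
  have htail : IntegrableOn (poissonWeight x) (Set.Ioi 3) := by
    refine Integrable.mono' hsq hcont.aestronglyMeasurable ?_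
    filter_upwards [ae_restrict_mem measurableSet_Ioi] with t (ht : 3 < t)
    have ht2 : 0 < t + (-2) := by linarith
    rw [Real.norm_of_nonneg (poissonWeight_pos hx (by linarith)).le, Real.rpow_neg ht2.le,
      Real.rpow_two, ← div_eq_mul_inv]
    exact poissonWeight_le_inv_sq hx ht.le
  refine ((hcont.integrableOn_Icc (a := a) (b := 3)).union htail).mono_set fun t ht => ?_
  exact (le_or_gt t 3).imp (fun h => ⟨(Set.mem_Ioi.1 ht).le, h⟩) id

theorem summable_poissonWeight (hx : 0 < x) {ν b : ℝ} (hν : 0 < ν) (hb : 0 < b) :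
    Summable fun i : ℕ => poissonWeight x (b + ν * i) := by
  obtain ⟨m, hm⟩ := exists_nat_gt (3 / ν)
  rw [div_lt_iff₀' hν] at hm
  rw [← summable_nat_add_iff m]
  have hsq : Summable fun i : ℕ => 3 * x ^ 2 / ν ^ 2 * (1 / (i : ℝ) ^ 2) :=
    (Real.summable_one_div_nat_pow.2 one_lt_two).mul_left _
  refine hsq.of_norm_bounded_eventually_nat ?_
  filter_upwards [eventually_gt_atTop 0] with i hi
  have hνi : 0 < ν * i := by positivity
  rw [Nat.cast_add, Real.norm_of_nonneg (poissonWeight_pos hx (by positivity)).le]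
  refine (poissonWeight_le_inv_sq hx (by linarith)).trans ?_
  rw [div_mul_div_comm, mul_one, ← mul_pow]
  gcongr
  linarith

theorem tsum_poissonWeight_one_add (x : ℝ) : ∑' i : ℕ, poissonWeight x (1 + i) = 1 := by
  have hterm (i : ℕ) : poissonWeight x (1 + i) = Real.exp (-x) * (x ^ i / i.factorial) := by
    rw [poissonWeight, add_comm, Real.Gamma_nat_eq_factorial, add_sub_cancel_right,
      Real.rpow_natCast, mul_assoc, ← div_eq_mul_inv]
  simp_rw [hterm]
  rw [tsum_mul_left, ← congrFun NormedSpace.exp_eq_tsum_div x, ← Real.exp_eq_exp_ℝ,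
    ← Real.exp_add, neg_add_cancel, Real.exp_zero]

end PoissonWeight

theorem sum_range_shift_sub_sum_range {G : Type*} [AddCommGroup G] (f : ℝ → G) (a ν : ℝ) (n : ℕ) :
    ∑ i ∈ Finset.range n, f (a + ν + ν * i) - ∑ i ∈ Finset.range n, f (a + ν * i) =
      f (a + ν * n) - f a := by
  have h := Finset.sum_range_sub (fun i : ℕ => f (a + ν * i)) n
  rw [Nat.cast_zero, mul_zero, add_zero, Finset.sum_sub_distrib] at h
  rw [← h]
  congr 1
  exact Finset.sum_congr rfl fun i _ => by
    rw [Nat.cast_succ, mul_add_one, add_right_comm, add_assoc]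

section RiemannSum

variable {E : Type*} [NormedAddCommGroup E] [NormedSpace ℝ E] {a ν : ℝ}

theorem norm_sub_sub_smul_deriv_le {f f' f'' : ℝ → E} {B : ℝ}
    (hf : ∀ t, HasDerivAt f (f' t) t) (hf' : ∀ t, HasDerivAt f' (f'' t) t) (hν : 0 ≤ ν)
    (hB : ∀ t ∈ Set.Icc a (a + ν), ‖f'' t‖ ≤ B) {t : ℝ} (ht : t ∈ Set.Icc a (a + ν)) :
    ‖f (a + ν) - f a - ν • f' t‖ ≤ ν ^ 2 * B := by
  have hB0 : 0 ≤ B := (norm_nonneg _).trans (hB t ht)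
  have hconvex : Convex ℝ (Set.Icc a (a + ν)) := convex_Icc a (a + ν)
  have hosc (s : ℝ) (hs : s ∈ Set.Icc a (a + ν)) : ‖f' s - f' t‖ ≤ B * ν := by
    refine (hconvex.norm_image_sub_le_of_norm_hasDerivWithin_le
      (fun r _ => (hf' r).hasDerivWithinAt) hB ht hs).trans ?_
    gcongr
    rw [Real.norm_eq_abs, abs_le]
    constructor <;> linarith [hs.1, hs.2, ht.1, ht.2]
  have hderiv (s : ℝ) : HasDerivAt (fun s : ℝ => f s - s • f' t) (f' s - f' t) s := by
    simpa using (hf s).fun_sub ((hasDerivAt_id s).smul_const (f' t))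
  have hmean := hconvex.norm_image_sub_le_of_norm_hasDerivWithin_le
    (fun r _ => (hderiv r).hasDerivWithinAt) hosc (x := a) (y := a + ν)
    ⟨le_rfl, by linarith⟩ ⟨by linarith, le_rfl⟩
  rw [add_sub_cancel_left, Real.norm_of_nonneg hν] at hmean
  calc ‖f (a + ν) - f a - ν • f' t‖ = ‖f (a + ν) - (a + ν) • f' t - (f a - a • f' t)‖ := by
        rw [add_smul]; congr 1; abel
    _ ≤ ν ^ 2 * B := hmean.trans_eq (by ring)

-- The jump of `F k` is `ν` times the mean of `F (k + 1)`, whose oscillation is controlled by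
-- `F (k + 2)`; descending from `k = N` trades one derivative for one jump at each step.
theorem norm_deriv_le_of_jumps_le {F : ℕ → ℝ → E} (hν : 0 < ν) {ε B : ℝ} (N : ℕ)
    (hF : ∀ k t, HasDerivAt (F k) (F (k + 1) t) t)
    (hε : ∀ k ≤ N, ‖F k (a + ν) - F k a‖ ≤ ε)
    (hB : ∀ t ∈ Set.Icc a (a + ν), ‖F (N + 1) t‖ ≤ B) {t : ℝ} (ht : t ∈ Set.Icc a (a + ν)) :
    ‖F 1 t‖ ≤ (1 + ν⁻¹ + ν) ^ N * (ε + B) := by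
  have hε0 : 0 ≤ ε := (norm_nonneg _).trans (hε 0 N.zero_le)
  induction N generalizing B with
  | zero => linarith [hB t ht]
  | succ N ih =>
    have hB0 : 0 ≤ B := (norm_nonneg _).trans (hB t ht)
    have hlower (s : ℝ) (hs : s ∈ Set.Icc a (a + ν)) : ‖F (N + 1) s‖ ≤ ν⁻¹ * ε + ν * B := by
      have hmean := norm_sub_sub_smul_deriv_le (hF N) (hF (N + 1)) hν.le hB hs
      have htri := norm_le_norm_add_norm_sub (F N (a + ν) - F N a) (ν • F (N + 1) s)
      rw [norm_smul, Real.norm_of_nonneg hν.le] at htri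
      have := hε N N.le_succ
      calc ‖F (N + 1) s‖ = ν⁻¹ * (ν * ‖F (N + 1) s‖) := (inv_mul_cancel_left₀ hν.ne' _).symm
        _ ≤ ν⁻¹ * (ε + ν ^ 2 * B) := by gcongr; linarith
        _ = ν⁻¹ * ε + ν * B := by field_simp
    calc ‖F 1 t‖ ≤ (1 + ν⁻¹ + ν) ^ N * (ε + (ν⁻¹ * ε + ν * B)) :=
          ih (fun k hk => hε k (hk.trans N.le_succ)) hlower
      _ ≤ (1 + ν⁻¹ + ν) ^ N * ((1 + ν⁻¹ + ν) * (ε + B)) := by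
          gcongr
          have : 0 ≤ B + ν⁻¹ * B + ν * ε := by positivity
          linarith
      _ = (1 + ν⁻¹ + ν) ^ (N + 1) * (ε + B) := by ring

variable [CompleteSpace E]

theorem norm_integral_sub_riemannSum_le {F : ℕ → ℝ → E} (hν : 0 < ν) {ε B : ℝ} (N n : ℕ)
    (hF : ∀ k t, HasDerivAt (F k) (F (k + 1) t) t)
    (hε : ∀ k ≤ N, ‖F k (a + ν * n) - F k a‖ ≤ ε)
    (hB : ∀ t ∈ Set.Icc a (a + ν), ‖∑ i ∈ Finset.range n, F (N + 1) (t + ν * i)‖ ≤ B) :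
    ‖(∫ s in a..a + ν * n, F 0 s) - ν • ∑ i ∈ Finset.range n, F 0 (a + ν * i)‖ ≤
      ν ^ 2 * ((1 + ν⁻¹ + ν) ^ N * (ε + B)) := by
  let S (k : ℕ) (t : ℝ) : E := ∑ i ∈ Finset.range n, F k (t + ν * i)
  let H (t : ℝ) : E := ∫ s in a..t, F 0 s
  have hcont : Continuous (F 0) := continuous_iff_continuousAt.2 fun t => (hF 0 t).continuousAt
  have hS (k : ℕ) (t : ℝ) : HasDerivAt (S k) (S (k + 1) t) t :=
    HasDerivAt.fun_sum fun i _ => (hF k _).comp_add_const t (ν * i)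
  have hH (t : ℝ) : HasDerivAt (fun t => ∑ i ∈ Finset.range n, H (t + ν * i)) (S 0 t) t :=
    HasDerivAt.fun_sum fun i _ => (hcont.integral_hasStrictDerivAt a _).hasDerivAt.comp_add_const
      t (ν * i)
  have hjump (k : ℕ) (hk : k ≤ N) : ‖S k (a + ν) - S k a‖ ≤ ε := by
    simpa only [S, sum_range_shift_sub_sum_range] using hε k hk
  have hend : a ∈ Set.Icc a (a + ν) := ⟨le_rfl, by linarith⟩
  have hmean := norm_sub_sub_smul_deriv_le hH (hS 0) hν.le
    (fun t ht => norm_deriv_le_of_jumps_le hν N hS hjump hB ht) hend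
  rwa [sum_range_shift_sub_sum_range H a ν n,
    show H a = 0 from intervalIntegral.integral_same, sub_zero] at hmean

theorem norm_integral_Ioi_sub_riemannSum_le {F : ℕ → ℝ → E} (hν : 0 < ν) {ε : ℝ} {b : ℕ → ℝ}
    (N : ℕ) (hF : ∀ k t, HasDerivAt (F k) (F (k + 1) t) t) (hε : ∀ k ≤ N, ‖F k a‖ ≤ ε)
    (hlim : ∀ k ≤ N, Tendsto (fun n : ℕ => F k (a + ν * n)) atTop (𝓝 0))
    (hb : Summable b) (hFb : ∀ i : ℕ, ∀ t ∈ Set.Icc a (a + ν), ‖F (N + 1) (t + ν * i)‖ ≤ b i)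
    (hint : IntegrableOn (F 0) (Set.Ioi a)) (hsum : Summable fun i : ℕ => F 0 (a + ν * i)) :
    ‖(∫ s in Set.Ioi a, F 0 s) - ν • ∑' i : ℕ, F 0 (a + ν * i)‖ ≤
      ν ^ 2 * ((1 + ν⁻¹ + ν) ^ N * (ε + ∑' i, b i)) := by
  let jump (n : ℕ) : ℝ := ∑ k ∈ Finset.range (N + 1), ‖F k (a + ν * n)‖
  have hfinite (n : ℕ) :
      ‖(∫ s in a..a + ν * n, F 0 s) - ν • ∑ i ∈ Finset.range n, F 0 (a + ν * i)‖ ≤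
        ν ^ 2 * ((1 + ν⁻¹ + ν) ^ N * (jump n + ε + ∑' i, b i)) := by
    refine norm_integral_sub_riemannSum_le hν N n hF (fun k hk => ?_) fun t ht => ?_
    · refine (norm_sub_le _ _).trans (add_le_add ?_ (hε k hk))
      exact Finset.single_le_sum (f := fun k => ‖F k (a + ν * n)‖) (fun _ _ => norm_nonneg _)
        (Finset.mem_range.2 (Nat.lt_succ_of_le hk))
    · have hb0 (i : ℕ) : 0 ≤ b i := (norm_nonneg _).trans (hFb i t ht)
      exact (norm_sum_le_of_le _ fun i _ => hFb i t ht).trans (hb.sum_le_tsum _ fun i _ => hb0 i)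
  have hjump : Tendsto jump atTop (𝓝 0) := by
    rw [← Finset.sum_const_zero (s := Finset.range (N + 1))]
    exact tendsto_finsetSum _ fun k hk => by
      simpa using (hlim k (Nat.lt_succ_iff.1 (Finset.mem_range.1 hk))).norm
  have hend : Tendsto (fun n : ℕ => a + ν * n) atTop atTop :=
    tendsto_atTop_add_const_left _ a (tendsto_natCast_atTop_atTop.const_mul_atTop hν)
  have hleft := ((intervalIntegral_tendsto_integral_Ioi a hint hend).sub
    (hsum.hasSum.tendsto_sum_nat.const_smul ν)).norm
  have hright := (((hjump.add_const ε).add_const (∑' i, b i)).const_mul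
    ((1 + ν⁻¹ + ν) ^ N)).const_mul (ν ^ 2)
  rw [zero_add] at hright
  exact le_of_tendsto_of_tendsto' hleft hright hfinite

end RiemannSum

section MittagLeffler

-- With `x = y ^ 4` the sums are cut near `t = y ^ 2`: below the cut the weights are `O (y ^ (-m))`
-- for every `m`, and above it Cauchy's estimate holds with radius `y`, so `k` derivatives gain
-- `y ^ (-k)`.

variable {y ν b : ℝ}

theorem abs_poissonWeightDeriv_pow_four_le_tail {s t : ℝ} (hy : 4 ≤ y) (hs : 0 ≤ s)
    (ht : y ^ 2 + s ≤ t) (k : ℕ) :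
    |poissonWeightDeriv (y ^ 4) k t| ≤ k.factorial * (9 * y ^ 8 / (1 + s) ^ 2) / y ^ k := by
  have hx : 0 < y ^ 4 := by positivity
  refine (abs_poissonWeightDeriv_le (r := y) (M := 3 * y ^ 8 / (1 + s) ^ 2) hx (by linarith)
    (by nlinarith) (fun τ hτ => ?_) k).trans_eq (by ring)
  have hτs : 1 + s ≤ τ - 2 := by nlinarith [hτ.1]
  refine (poissonWeight_le_inv_sq hx (by linarith)).trans ?_
  rw [← pow_mul]
  gcongr

theorem abs_poissonWeightDeriv_pow_four_le_near {t : ℝ} (hy : 4 ≤ y)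
    (ht : t ∈ Set.Icc (y ^ 2) (2 * y ^ 2)) {m : ℕ} (hm : m ≠ 0) (k : ℕ) :
    |poissonWeightDeriv (y ^ 4) k t| ≤ k.factorial * (9 * (4 + m) ^ m / y ^ (2 * m)) / y ^ k := by
  refine (abs_poissonWeightDeriv_le (r := y) (M := 3 * (4 + m) ^ m / y ^ (2 * m)) (by positivity)
    (by linarith) (by nlinarith [ht.1]) (fun τ hτ => ?_) k).trans_eq (by ring)
  exact poissonWeight_pow_four_le (by linarith) (by nlinarith [hτ.1, ht.1])
    (by nlinarith [hτ.2, ht.2]) hm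

theorem tendsto_poissonWeightDeriv_add_mul_nat {a : ℝ} (hy : 4 ≤ y) (hν : 0 < ν) (ha : y ^ 2 ≤ a)
    (k : ℕ) : Tendsto (fun n : ℕ => poissonWeightDeriv (y ^ 4) k (a + ν * n)) atTop (𝓝 0) := by
  have hend : Tendsto (fun n : ℕ => 1 + ν * n) atTop atTop :=
    tendsto_atTop_add_const_left _ 1 (tendsto_natCast_atTop_atTop.const_mul_atTop hν)
  have hbound := (((tendsto_const_nhds (x := 9 * y ^ 8)).div_atTop
    ((tendsto_pow_atTop two_ne_zero).comp hend)).const_mul (k.factorial : ℝ)).div_const (y ^ k)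
  rw [mul_zero, zero_div] at hbound
  refine squeeze_zero_norm (fun n => ?_) hbound
  exact abs_poissonWeightDeriv_pow_four_le_tail hy (by positivity) (by gcongr) k

theorem summable_inv_one_add_mul_nat_sq (hν : 0 < ν) :
    Summable fun i : ℕ => ((1 + ν * i) ^ 2)⁻¹ := by
  have hsq : Summable fun i : ℕ => (ν ^ 2)⁻¹ * ((i : ℝ) ^ 2)⁻¹ :=
    (Real.summable_nat_pow_inv.2 one_lt_two).mul_left _
  refine hsq.of_norm_bounded_eventually_nat ?_
  filter_upwards [eventually_gt_atTop 0] with i hi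
  rw [Real.norm_of_nonneg (by positivity), ← mul_inv, ← mul_pow]
  gcongr
  linarith

theorem exists_abs_integral_Ioi_sub_tsum_poissonWeight_le (hν : 0 < ν) {m : ℕ} (hm : m ≠ 0) :
    ∃ C, ∀ y : ℝ, 4 ≤ y → ∀ a ∈ Set.Icc (y ^ 2) (2 * y ^ 2),
      |(∫ s in Set.Ioi a, poissonWeight (y ^ 4) s) -
        ν * ∑' i : ℕ, poissonWeight (y ^ 4) (a + ν * i)| ≤ C / y ^ (2 * m) := by
  obtain ⟨N, hN⟩ : ∃ N, N = 2 * m + 7 := ⟨_, rfl⟩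
  refine ⟨ν ^ 2 * ((1 + ν⁻¹ + ν) ^ N * ((N.factorial : ℝ) * (9 * (4 + m) ^ m) +
    ∑' i : ℕ, ((N + 1).factorial : ℝ) * 9 * ((1 + ν * (i : ℝ)) ^ 2)⁻¹)), fun y hy a ha => ?_⟩
  have : 0 < y := by linarith
  have hx : 0 < y ^ 4 := by positivity
  have hend (k : ℕ) (hk : k ≤ N) :
      ‖poissonWeightDeriv (y ^ 4) k a‖ ≤ N.factorial * (9 * (4 + m) ^ m / y ^ (2 * m)) := by
    refine (abs_poissonWeightDeriv_pow_four_le_near hy ha hm k).trans ?_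
    refine (div_le_self (by positivity) (one_le_pow₀ (by linarith))).trans ?_
    gcongr
  have htail (i : ℕ) (t : ℝ) (ht : t ∈ Set.Icc a (a + ν)) :
      ‖poissonWeightDeriv (y ^ 4) (N + 1) (t + ν * i)‖ ≤
        (N + 1).factorial * 9 * ((1 + ν * i) ^ 2)⁻¹ * (y ^ (2 * m))⁻¹ := by
    refine (abs_poissonWeightDeriv_pow_four_le_tail (s := ν * i) hy (by positivity)
      (by linarith [ha.1, ht.1]) (N + 1)).trans_eq ?_
    rw [show N + 1 = 2 * m + 8 by omega, pow_add]
    field_simp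
  have hsum := (summable_inv_one_add_mul_nat_sq hν).mul_left ((N + 1).factorial * 9 : ℝ)
  have h := norm_integral_Ioi_sub_riemannSum_le hν N
    (hasDerivAt_poissonWeightDeriv hx.ne') hend
    (fun k _ => tendsto_poissonWeightDeriv_add_mul_nat hy hν ha.1 k) (hsum.mul_right _) htail
  rw [poissonWeightDeriv_zero hx.le, tsum_mul_right, smul_eq_mul, Real.norm_eq_abs] at h
  refine (h (integrableOn_poissonWeight hx a)
    (summable_poissonWeight hx hν (by nlinarith [ha.1]))).trans_eq ?_
  field_simp

theorem sum_range_poissonWeight_pow_four_le (hy : 1 ≤ y) (hν : 0 < ν) (hb : 0 < b) {n : ℕ}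
    (hn : b + ν * n ≤ 4 * y ^ 2) {m : ℕ} (hm : m ≠ 0) :
    ν * ∑ i ∈ Finset.range n, poissonWeight (y ^ 4) (b + ν * i) ≤
      4 * y ^ 2 * (3 * (4 + m) ^ m / y ^ (2 * m)) := by
  have hterm (i : ℕ) (hi : i ∈ Finset.range n) :
      poissonWeight (y ^ 4) (b + ν * i) ≤ 3 * (4 + m) ^ m / y ^ (2 * m) := by
    refine poissonWeight_pow_four_le hy (by positivity) (le_trans ?_ hn) hm
    have : (i : ℝ) ≤ n := Nat.cast_le.2 (Finset.mem_range.1 hi).le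
    gcongr
  calc ν * ∑ i ∈ Finset.range n, poissonWeight (y ^ 4) (b + ν * i)
      ≤ ν * (n * (3 * (4 + m) ^ m / y ^ (2 * m))) := by
        gcongr
        simpa using Finset.sum_le_card_nsmul _ _ _ hterm
    _ = ν * n * (3 * (4 + m) ^ m / y ^ (2 * m)) := (mul_assoc _ _ _).symm
    _ ≤ 4 * y ^ 2 * (3 * (4 + m) ^ m / y ^ (2 * m)) :=
        mul_le_mul_of_nonneg_right (by linarith) (by positivity)

theorem abs_integral_poissonWeight_pow_four_le {a : ℝ} (hy : 1 ≤ y)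
    (ha : a ∈ Set.Icc (y ^ 2) (4 * y ^ 2)) {m : ℕ} (hm : m ≠ 0) :
    |∫ s in y ^ 2..a, poissonWeight (y ^ 4) s| ≤ 4 * y ^ 2 * (3 * (4 + m) ^ m / y ^ (2 * m)) := by
  have hy2 : 0 < y ^ 2 := by positivity
  have hle : ∀ s ∈ Set.uIoc (y ^ 2) a,
      ‖poissonWeight (y ^ 4) s‖ ≤ 3 * (4 + m) ^ m / y ^ (2 * m) := fun s hs => by
    rw [Set.uIoc_of_le ha.1] at hs
    have hs0 : 0 < s := hy2.trans hs.1
    rw [Real.norm_of_nonneg (poissonWeight_pos (by positivity) hs0).le]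
    exact poissonWeight_pow_four_le hy hs0 (hs.2.trans ha.2) hm
  refine (intervalIntegral.norm_integral_le_of_norm_le_const hle).trans ?_
  rw [abs_of_nonneg (sub_nonneg.2 ha.1), mul_comm]
  gcongr
  linarith [ha.2]

theorem isBigO_tsum_poissonWeight_sub_integral (hν : 0 < ν) (hb : 0 < b) {m : ℕ} (hm : m ≠ 0) :
    (fun y : ℝ => ν * ∑' i : ℕ, poissonWeight (y ^ 4) (b + ν * i) -
      ∫ s in Set.Ioi (y ^ 2), poissonWeight (y ^ 4) s) =O[atTop] fun y => (y ^ (2 * m))⁻¹ := by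
  obtain ⟨C, hC⟩ := exists_abs_integral_Ioi_sub_tsum_poissonWeight_le hν hm
  refine IsBigO.of_bound (24 * (4 + (m + 1 : ℕ)) ^ (m + 1) + C) ?_
  filter_upwards [eventually_ge_atTop (4 + b + ν)] with y hy
  have hy1 : 1 ≤ y := by linarith
  have hx : 0 < y ^ 4 := by positivity
  obtain ⟨n, hn⟩ : ∃ n, n = ⌈y ^ 2 / ν⌉₊ := ⟨_, rfl⟩
  have hlower : y ^ 2 ≤ ν * n := by
    rw [hn, ← div_le_iff₀' hν]; exact Nat.le_ceil _
  have hupper : ν * n ≤ y ^ 2 + ν := by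
    have h := (Nat.ceil_lt_add_one (a := y ^ 2 / ν) (by positivity)).le
    rw [← hn, div_add_one hν.ne', le_div_iff₀' hν] at h
    exact h
  have hcut : b + ν * n ∈ Set.Icc (y ^ 2) (2 * y ^ 2) := ⟨by linarith, by nlinarith⟩
  have hcut4 : b + ν * n ≤ 4 * y ^ 2 := hcut.2.trans (by nlinarith)
  have hsplit := (summable_poissonWeight hx hν hb).sum_add_tsum_nat_add n
  simp only [Nat.cast_add, add_comm _ (n : ℝ), mul_add, ← add_assoc b] at hsplit
  have hintegral := intervalIntegral.integral_interval_add_Ioi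
    (integrableOn_poissonWeight hx (y ^ 2)) (integrableOn_poissonWeight hx (b + ν * n))
  have hhead := sum_range_poissonWeight_pow_four_le hy1 hν hb hcut4 m.succ_ne_zero
  have hhead0 : 0 ≤ ν * ∑ i ∈ Finset.range n, poissonWeight (y ^ 4) (b + ν * i) :=
    mul_nonneg hν.le (Finset.sum_nonneg fun i _ => (poissonWeight_pos hx (by positivity)).le)
  have hgap := abs_le.1
    (abs_integral_poissonWeight_pow_four_le hy1 ⟨hcut.1, hcut4⟩ m.succ_ne_zero)
  have hcore := abs_le.1 (hC y (by linarith) _ hcut)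
  have hscale : 4 * y ^ 2 * (3 * (4 + (m + 1 : ℕ)) ^ (m + 1) / y ^ (2 * (m + 1))) =
      12 * (4 + (m + 1 : ℕ)) ^ (m + 1) * (y ^ (2 * m))⁻¹ := by
    field_simp; ring
  rw [hscale] at hhead hgap
  rw [div_eq_mul_inv] at hcore
  rw [← hsplit, ← hintegral, Real.norm_eq_abs, Real.norm_of_nonneg (by positivity), abs_le]
  constructor <;> linarith [hgap.1, hgap.2, hcore.1, hcore.2]

theorem isBigO_tsum_poissonWeight_sub_one (hν : 0 < ν) (hb : 0 < b) (p : ℕ) :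
    (fun x : ℝ => ν * ∑' i : ℕ, poissonWeight x (b + ν * i) - 1) =O[atTop] fun x => (x ^ p)⁻¹ := by
  have hp : 2 * p + 2 ≠ 0 := by omega
  have hroot : Tendsto (fun x : ℝ => x ^ (1 / 4 : ℝ)) atTop atTop :=
    tendsto_rpow_atTop (by norm_num)
  have hdiff := (isBigO_tsum_poissonWeight_sub_integral hν hb hp).sub
    (isBigO_tsum_poissonWeight_sub_integral one_pos one_pos hp)
  refine ((hdiff.comp_tendsto hroot).congr' ?_ EventuallyEq.rfl).trans ?_
  · filter_upwards [eventually_ge_atTop 0] with x hx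
    have hpow : (x ^ (1 / 4 : ℝ)) ^ 4 = x := by
      rw [← Real.rpow_mul_natCast hx]; norm_num
    simp only [Function.comp_apply, hpow, one_mul, tsum_poissonWeight_one_add]
    ring
  · refine IsBigO.of_bound 1 ?_
    filter_upwards [eventually_ge_atTop 1] with x hx
    have hx0 : 0 ≤ x := zero_le_one.trans hx
    have hpow : (x ^ (1 / 4 : ℝ)) ^ (2 * (2 * p + 2)) = x ^ (p + 1) := by
      rw [show 2 * (2 * p + 2) = 4 * (p + 1) by ring, pow_mul, ← Real.rpow_mul_natCast hx0]
      norm_num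
    rw [Function.comp_apply, hpow, one_mul, Real.norm_of_nonneg (by positivity),
      Real.norm_of_nonneg (by positivity)]
    gcongr
    exact p.le_succ

end MittagLeffler

section PowerSeriesExponential

/-- The Taylor coefficients at zero of the exponential of the power series with coefficients `p`,
computed from the differential equation `(exp ∘ P)' = P' * (exp ∘ P)`. -/
noncomputable def expCoeff (p : ℕ → ℝ) : ℕ → ℝ
  | 0 => Real.exp (p 0)
  | n + 1 => (∑ k : Fin (n + 1), (k + 1) * p (k + 1) * expCoeff p (n - k)) / (n + 1)

theorem add_one_mul_expCoeff_add_one (p : ℕ → ℝ) (n : ℕ) :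
    (n + 1) * expCoeff p (n + 1) =
      ∑ k ∈ Finset.range (n + 1), (k + 1) * p (k + 1) * expCoeff p (n - k) := by
  rw [expCoeff, mul_div_cancel₀ _ (by positivity),
    Fin.sum_univ_eq_sum_range fun k : ℕ => (k + 1) * p (k + 1) * expCoeff p (n - k)]

theorem isBigO_pow_add_one_of_deriv {f f' : ℝ → ℝ} {n : ℕ} (hf : ∀ ε, HasDerivAt f (f' ε) ε)
    (hf' : f' =O[𝓝 0] fun ε => ε ^ n) : (fun ε => f ε - f 0) =O[𝓝 0] fun ε => ε ^ (n + 1) := by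
  obtain ⟨C, hC0, hC⟩ := hf'.exists_pos
  obtain ⟨r, hr, hball⟩ := Metric.eventually_nhds_iff_ball.1 hC.bound
  refine IsBigO.of_bound C ?_
  filter_upwards [Metric.ball_mem_nhds (0 : ℝ) hr] with ε hε
  have hderiv (t : ℝ) (ht : t ∈ Metric.closedBall 0 ‖ε‖) : ‖f' t‖ ≤ C * ‖ε‖ ^ n := by
    have ht' : ‖t‖ ≤ ‖ε‖ := mem_closedBall_zero_iff.1 ht
    refine (hball t (mem_ball_zero_iff.2 (ht'.trans_lt (mem_ball_zero_iff.1 hε)))).trans ?_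
    rw [norm_pow]
    gcongr
  refine ((convex_closedBall (0 : ℝ) ‖ε‖).norm_image_sub_le_of_norm_hasDerivWithin_le
    (fun t _ => (hf t).hasDerivWithinAt) hderiv (Metric.mem_closedBall_self (norm_nonneg ε))
    (mem_closedBall_zero_iff.2 le_rfl)).trans_eq ?_
  rw [sub_zero, norm_pow, pow_succ, mul_assoc]

/-- The polynomial `∑ k < N, a k * X ^ k`, the truncation of a power series. -/
noncomputable def truncatedSeries (a : ℕ → ℝ) (N : ℕ) : Polynomial ℝ :=
  ∑ k ∈ Finset.range N, Polynomial.C (a k) * Polynomial.X ^ k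

theorem eval_truncatedSeries (a : ℕ → ℝ) (N : ℕ) (ε : ℝ) :
    (truncatedSeries a N).eval ε = ∑ k ∈ Finset.range N, a k * ε ^ k := by
  simp [truncatedSeries, Polynomial.eval_finsetSum]

theorem coeff_truncatedSeries (a : ℕ → ℝ) {N n : ℕ} (hn : n < N) :
    (truncatedSeries a N).coeff n = a n := by
  simp [truncatedSeries, hn]

theorem X_pow_dvd_derivative_truncatedSeries_expCoeff_sub (p : ℕ → ℝ) (N : ℕ) :
    Polynomial.X ^ N ∣ (truncatedSeries (expCoeff p) (N + 1)).derivative -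
      (truncatedSeries p (N + 1)).derivative * truncatedSeries (expCoeff p) (N + 1) := by
  refine Polynomial.X_pow_dvd_iff.2 fun n hn => ?_
  rw [Polynomial.coeff_sub, Polynomial.coeff_derivative, Polynomial.coeff_mul,
    coeff_truncatedSeries _ (by omega), mul_comm, add_one_mul_expCoeff_add_one,
    Finset.Nat.sum_antidiagonal_eq_sum_range_succ_mk, sub_eq_zero]
  refine Finset.sum_congr rfl fun k hk => ?_
  have hk' : k ≤ n := Finset.mem_range_succ_iff.1 hk
  rw [Polynomial.coeff_derivative, coeff_truncatedSeries _ (by omega),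
    coeff_truncatedSeries _ (by omega), mul_comm (p (k + 1))]

theorem isBigO_exp_sum_sub_sum_expCoeff (p : ℕ → ℝ) (N : ℕ) :
    (fun ε : ℝ => Real.exp (∑ k ∈ Finset.range N, p k * ε ^ k) -
      ∑ k ∈ Finset.range N, expCoeff p k * ε ^ k) =O[𝓝 0] fun ε => ε ^ N := by
  cases N with
  | zero => simpa using isBigO_refl (fun _ : ℝ => (1 : ℝ)) (𝓝 0)
  | succ N =>
    simp only [← eval_truncatedSeries]
    obtain ⟨D, hD⟩ := X_pow_dvd_derivative_truncatedSeries_expCoeff_sub p N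
    set P := truncatedSeries p (N + 1) with hP
    set Q := truncatedSeries (expCoeff p) (N + 1) with hQ
    let f (ε : ℝ) : ℝ := Q.eval ε * Real.exp (-P.eval ε)
    have hf (ε : ℝ) : HasDerivAt f (ε ^ N * (D.eval ε * Real.exp (-P.eval ε))) ε := by
      have hfactor := congrArg (Polynomial.eval ε) hD
      simp only [Polynomial.eval_sub, Polynomial.eval_mul, Polynomial.eval_pow,
        Polynomial.eval_X] at hfactor
      refine ((Q.hasDerivAt ε).mul (P.hasDerivAt ε).neg.exp).congr_deriv ?_
      linear_combination Real.exp (-P.eval ε) * hfactor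
    have hf' : (fun ε => ε ^ N * (D.eval ε * Real.exp (-P.eval ε))) =O[𝓝 0] fun ε => ε ^ N := by
      have hcont : Continuous fun ε => D.eval ε * Real.exp (-P.eval ε) := by fun_prop
      simpa using (isBigO_refl (fun ε : ℝ => ε ^ N) (𝓝 0)).mul ((hcont.tendsto 0).isBigO_one ℝ)
    have hf0 : f 0 = 1 := by
      simp [f, hP, hQ, eval_truncatedSeries, Finset.sum_range_succ', expCoeff, ← Real.exp_add]
    have hexp : Continuous fun ε => Real.exp (P.eval ε) := by fun_prop
    refine (((hexp.tendsto 0).isBigO_one ℝ).mul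
      (isBigO_pow_add_one_of_deriv hf hf').neg_left).congr (fun ε => ?_) fun ε => one_mul _
    rw [hf0]
    simp only [f, Real.exp_neg]
    field_simp
    ring

end PowerSeriesExponential

section InverseFactorialSeries

/-- The `k`-th inverse factorial `∏ m < k, 1 / (s + α + m)`, as a function of `ε = 1 / s`. -/
noncomputable def invRising (α : ℝ) (k : ℕ) (ε : ℝ) : ℝ :=
  ∏ m ∈ Finset.range k, ε / (1 + (α + m) * ε)

theorem invRising_zero (α ε : ℝ) : invRising α 0 ε = 1 :=
  Finset.prod_range_zero _

theorem invRising_add_one (α : ℝ) (k : ℕ) (ε : ℝ) :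
    invRising α (k + 1) ε = ε / (1 + α * ε) * invRising (α + 1) k ε := by
  simp only [invRising, Finset.prod_range_succ', Nat.cast_zero, add_zero, mul_comm _ (ε / _)]
  refine congrArg _ (Finset.prod_congr rfl fun m _ => ?_)
  rw [Nat.cast_succ, add_right_comm, add_assoc α, add_comm 1]

theorem isEquivalent_div_one_add_mul (α : ℝ) :
    (fun ε : ℝ => ε / (1 + α * ε)) ~[𝓝 0] fun ε => ε := by
  have hcont : Continuous fun ε : ℝ => 1 + α * ε := by fun_prop
  have hden : Tendsto (fun ε : ℝ => 1 + α * ε) (𝓝 0) (𝓝 1) := by simpa using hcont.tendsto 0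
  have h := (IsEquivalent.refl (u := fun ε : ℝ => ε)).div
    ((isEquivalent_const_iff_tendsto one_ne_zero).2 hden)
  exact h.congr_right (.of_forall fun ε => div_one ε)

theorem isEquivalent_invRising (α : ℝ) (k : ℕ) : invRising α k ~[𝓝 0] fun ε => ε ^ k := by
  induction k generalizing α with
  | zero => exact IsEquivalent.refl.congr_left (.of_forall fun ε => by simp [invRising_zero])
  | succ k ih =>
    simp only [funext (invRising_add_one α k), pow_succ']
    exact (isEquivalent_div_one_add_mul α).mul (ih (α + 1))

theorem Gamma_mul_inv_Gamma_add_nat {s α : ℝ} (hs : 0 < s) (hα : 0 < s + α) (k : ℕ) :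
    Real.Gamma (s + α) * (Real.Gamma (s + α + k))⁻¹ = invRising α k s⁻¹ := by
  induction k with
  | zero => simp [invRising_zero, (Real.Gamma_pos_of_pos hα).ne']
  | succ k ih =>
    have hk : 0 < s + α + k := by positivity
    have hfactor : s⁻¹ / (1 + (α + k) * s⁻¹) = (s + α + k)⁻¹ := by
      rw [show 1 + (α + k) * s⁻¹ = (s + α + k) * s⁻¹ by field_simp; ring,
        div_mul_cancel_right₀ (inv_ne_zero hs.ne')]
    rw [invRising, Finset.prod_range_succ, ← invRising, ← ih, hfactor, Nat.cast_succ, ← add_assoc,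
      Real.Gamma_add_one hk.ne', mul_inv]
    ring

/-- The coefficients left after splitting off the constant term of `∑ T n * ε ^ n` and dividing by
`ε / (1 + α * ε)`. -/
def inverseFactorialShift (α : ℝ) (T : ℕ → ℝ) : ℕ → ℝ
  | 0 => T 1
  | n + 1 => T (n + 2) + α * T (n + 1)

/-- The coefficients of the re-expansion of the formal power series `∑ T n * ε ^ n` in the inverse
factorials `invRising α k ε`. -/
def inverseFactorialCoeff : ℝ → (ℕ → ℝ) → ℕ → ℝ
  | _, T, 0 => T 0
  | α, T, k + 1 => inverseFactorialCoeff (α + 1) (inverseFactorialShift α T) k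

theorem one_add_mul_mul_sum_range_shift (α : ℝ) (T : ℕ → ℝ) (N : ℕ) (ε : ℝ) :
    (1 + α * ε) * ∑ n ∈ Finset.range (N + 1), T (n + 1) * ε ^ n =
      ∑ n ∈ Finset.range (N + 1), inverseFactorialShift α T n * ε ^ n +
        α * T (N + 1) * ε ^ (N + 1) := by
  induction N with
  | zero => simp [inverseFactorialShift]; ring
  | succ N ih =>
    rw [Finset.sum_range_succ, mul_add, ih, Finset.sum_range_succ _ (N + 1), inverseFactorialShift]
    ring

theorem isBigO_sum_sub_sum_inverseFactorialShift (α : ℝ) (T : ℕ → ℝ) (N : ℕ) :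
    (fun ε : ℝ => (1 + α * ε) * ∑ n ∈ Finset.range N, T (n + 1) * ε ^ n -
      ∑ n ∈ Finset.range N, inverseFactorialShift α T n * ε ^ n) =O[𝓝 0] fun ε => ε ^ N := by
  cases N with
  | zero => simpa using isBigO_zero (E' := ℝ) (fun _ : ℝ => (1 : ℝ)) (𝓝 0)
  | succ N =>
    simp only [one_add_mul_mul_sum_range_shift, add_sub_cancel_left]
    exact isBigO_const_mul_self _ _ _

theorem isBigO_sum_sub_sum_inverseFactorialCoeff (N : ℕ) (α : ℝ) (T : ℕ → ℝ) :
    (fun ε : ℝ => ∑ n ∈ Finset.range N, T n * ε ^ n -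
      ∑ k ∈ Finset.range N, inverseFactorialCoeff α T k * invRising α k ε)
      =O[𝓝 0] fun ε => ε ^ N := by
  induction N generalizing α T with
  | zero => simpa using isBigO_zero (E' := ℝ) (fun _ : ℝ => (1 : ℝ)) (𝓝 0)
  | succ N ih =>
    have htail := (isBigO_sum_sub_sum_inverseFactorialShift α T N).add
      (ih (α + 1) (inverseFactorialShift α T))
    refine ((isEquivalent_div_one_add_mul α).isBigO.mul htail).congr' ?_
      (.of_forall fun ε => (pow_succ' ε N).symm)
    have hcont : Continuous fun ε : ℝ => 1 + α * ε := by fun_prop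
    filter_upwards [hcont.continuousAt.eventually_ne (y := 0) (by simp)] with ε hε
    have hT : ∑ n ∈ Finset.range (N + 1), T n * ε ^ n =
        ε * ∑ n ∈ Finset.range N, T (n + 1) * ε ^ n + T 0 := by
      rw [Finset.sum_range_succ', Finset.mul_sum, pow_zero, mul_one]
      simp only [pow_succ', mul_left_comm]
    have hcoeff : ∑ k ∈ Finset.range (N + 1), inverseFactorialCoeff α T k * invRising α k ε =
        ε / (1 + α * ε) * ∑ k ∈ Finset.range N, inverseFactorialCoeff (α + 1)
          (inverseFactorialShift α T) k * invRising (α + 1) k ε + T 0 := by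
      rw [Finset.sum_range_succ', Finset.mul_sum]
      simp only [invRising_add_one, invRising_zero, mul_left_comm, inverseFactorialCoeff, mul_one]
    rw [hT, hcoeff, sub_add_sub_cancel, mul_sub, add_sub_add_right_eq_sub, ← mul_assoc,
      div_mul_cancel₀ _ hε]

theorem isBigO_exp_sum_sub_sum_inverseFactorialCoeff (α : ℝ) (p : ℕ → ℝ) (N : ℕ) :
    (fun ε : ℝ => Real.exp (∑ k ∈ Finset.range N, p k * ε ^ k) -
      ∑ k ∈ Finset.range N, inverseFactorialCoeff α (expCoeff p) k * invRising α k ε)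
      =O[𝓝 0] fun ε => ε ^ N :=
  ((isBigO_exp_sum_sub_sum_expCoeff p N).add
    (isBigO_sum_sub_sum_inverseFactorialCoeff N α (expCoeff p))).congr_left fun _ =>
      sub_add_sub_cancel _ _ _

end InverseFactorialSeries

section InverseFactorialPower

/-- The coefficients in powers of `1 / (ν * u)` of the Stirling series of
`log (Γ (ν * u + 1 / 2) / Γ (u + 1 / 2) ^ ν)`. -/
noncomputable def stirlingRatioCoeff (ν : ℝ) (k : ℕ) : ℝ :=
  stirlingCoeff k * (1 - ν ^ (k + 1))

theorem inverseFactorialCoeff_expCoeff_stirlingRatioCoeff (ν : ℝ) {k : ℕ} (hk : k < 8) :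
    inverseFactorialCoeff (1 / 2) (expCoeff (stirlingRatioCoeff ν)) k = cmpCoeff ν k := by
  interval_cases k <;>
    simp [inverseFactorialCoeff, inverseFactorialShift, expCoeff, Fin.sum_univ_succ,
      stirlingRatioCoeff, stirlingCoeff, cmpCoeff] <;> ring

/-- The `i`-th term of the series for `Z (λ, ν)`, normalised so that as a function of
`x = ν * λ ^ (1 / ν)` it becomes a multiple of `exp (-x) * x ^ (ν * i + (ν - 1) / 2)`. -/
noncomputable def cmpWeight (ν : ℝ) (i : ℕ) : ℝ :=
  ν ^ (-(ν * (i + 1 / 2))) * (2 * Real.pi) ^ ((ν - 1) / 2) / (i.factorial : ℝ) ^ ν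

variable {ν : ℝ}

theorem cmpWeight_mul_Gamma (hν : 0 < ν) (i : ℕ) :
    cmpWeight ν i * Real.Gamma (ν * (i + 1 / 2) + 1 / 2) =
      Real.exp (∑ k ∈ Finset.range 8, stirlingRatioCoeff ν k * (ν * (i + 1 / 2))⁻¹ ^ k +
        (stirlingRemainder (ν * (i + 1 / 2)) - ν * stirlingRemainder (i + 1 / 2))) := by
  have hfactorial : (i.factorial : ℝ) = Real.Gamma (i + 1 / 2 + 1 / 2) := by
    rw [add_assoc, add_halves, Real.Gamma_nat_eq_factorial]
  obtain ⟨u, hu⟩ : ∃ u : ℝ, u = i + 1 / 2 := ⟨_, rfl⟩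
  have hu0 : 0 < u := by rw [hu]; positivity
  have hGamma : 0 < Real.Gamma (ν * u + 1 / 2) := Real.Gamma_pos_of_pos (by positivity)
  have hGamma' : 0 < Real.Gamma (u + 1 / 2) := Real.Gamma_pos_of_pos (by positivity)
  have hpi : 0 < 2 * Real.pi := by positivity
  have hterm (k : ℕ) : stirlingRatioCoeff ν k * (ν * u)⁻¹ ^ k =
      stirlingCoeff k * ((ν * u) ^ k)⁻¹ - ν * (stirlingCoeff k * (u ^ k)⁻¹) := by
    rw [stirlingRatioCoeff, inv_pow, mul_pow]
    field_simp
    ring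
  rw [cmpWeight, hfactorial, ← hu, eq_comm, ← Real.exp_log (x := _ * Real.Gamma (ν * u + 1 / 2))
    (by positivity), Real.log_mul (by positivity) hGamma.ne',
    Real.log_div (by positivity) (by positivity), Real.log_mul (by positivity) (by positivity),
    Real.log_rpow hν, Real.log_rpow hpi, Real.log_rpow hGamma']
  simp only [hterm, Finset.sum_sub_distrib, ← Finset.mul_sum]
  rw [stirlingRemainder, stirlingRemainder, Real.log_mul hν.ne' hu0.ne']
  exact congrArg Real.exp (by ring)

theorem tendsto_inv_mul_nat_add_half (hν : 0 < ν) :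
    Tendsto (fun i : ℕ => (ν * (i + 1 / 2))⁻¹) atTop (𝓝 0) :=
  tendsto_inv_atTop_zero.comp <|
    (tendsto_atTop_add_const_right _ _ tendsto_natCast_atTop_atTop).const_mul_atTop hν

theorem isBigO_stirlingRemainder_mul_sub (hν : 0 < ν) :
    (fun i : ℕ => stirlingRemainder (ν * (i + 1 / 2)) - ν * stirlingRemainder (i + 1 / 2))
      =O[atTop] fun i => (ν * (i + 1 / 2))⁻¹ ^ 8 := by
  have hnat : Tendsto (fun i : ℕ => (i : ℝ) + 1 / 2) atTop atTop :=
    tendsto_atTop_add_const_right _ _ tendsto_natCast_atTop_atTop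
  have hscaled := isBigO_stirlingRemainder.comp_tendsto (hnat.const_mul_atTop hν)
  have hunscaled := (isBigO_stirlingRemainder.comp_tendsto hnat).const_mul_left ν
  refine (hscaled.congr_right fun i => ?_).sub (hunscaled.trans ?_)
  · rw [inv_pow, Function.comp_apply]
  · refine IsBigO.of_bound (ν ^ 8) (.of_forall fun i => le_of_eq ?_)
    simp only [Function.comp_apply, norm_inv, norm_pow, norm_mul, Real.norm_of_nonneg hν.le]
    field_simp

theorem isBigO_cmpWeight_mul_Gamma_sub (hν : 0 < ν) :
    (fun i : ℕ => cmpWeight ν i * Real.Gamma (ν * (i + 1 / 2) + 1 / 2) -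
      ∑ k ∈ Finset.range 8, cmpCoeff ν k * invRising (1 / 2) k (ν * (i + 1 / 2))⁻¹)
      =O[atTop] fun i => (ν * (i + 1 / 2))⁻¹ ^ 8 := by
  have hε := tendsto_inv_mul_nat_add_half hν
  have hη := isBigO_stirlingRemainder_mul_sub hν
  have hη0 := hη.trans_tendsto (by simpa using hε.pow 8)
  have hseries : Continuous fun ε : ℝ =>
      Real.exp (∑ k ∈ Finset.range 8, stirlingRatioCoeff ν k * ε ^ k) := by fun_prop
  have hmain := (isBigO_exp_sum_sub_sum_inverseFactorialCoeff (1 / 2)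
    (stirlingRatioCoeff ν) 8).comp_tendsto hε
  have hexp : (fun t => Real.exp t - 1) =O[𝓝 0] fun t => t := by
    simpa using (Real.differentiableAt_exp (x := 0)).isBigO_sub
  have herror := (((hseries.tendsto 0).comp hε).isBigO_one ℝ).mul
    ((hexp.comp_tendsto hη0).trans hη)
  refine (hmain.add (herror.congr_right fun _ => one_mul _)).congr_left fun i => ?_
  have hcoeff (ε : ℝ) : ∑ k ∈ Finset.range 8,
      inverseFactorialCoeff (1 / 2) (expCoeff (stirlingRatioCoeff ν)) k * invRising (1 / 2) k ε =
        ∑ k ∈ Finset.range 8, cmpCoeff ν k * invRising (1 / 2) k ε :=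
    Finset.sum_congr rfl fun k hk => by
      rw [inverseFactorialCoeff_expCoeff_stirlingRatioCoeff ν (Finset.mem_range.1 hk)]
  rw [cmpWeight_mul_Gamma hν, Real.exp_add]
  simp only [Function.comp_apply, hcoeff]
  ring

theorem exists_abs_cmpWeight_sub_le (hν : 0 < ν) : ∃ C, ∀ i : ℕ,
    |cmpWeight ν i - ∑ k ∈ Finset.range 8,
      cmpCoeff ν k * (Real.Gamma ((1 + ν) / 2 + k + ν * i))⁻¹| ≤
      C * (Real.Gamma ((1 + ν) / 2 + (8 : ℕ) + ν * i))⁻¹ := by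
  have hne (i : ℕ) : Real.Gamma (ν * (i + 1 / 2) + 1 / 2) ≠ 0 :=
    (Real.Gamma_pos_of_pos (by positivity)).ne'
  have hshift (k i : ℕ) : (Real.Gamma ((1 + ν) / 2 + k + ν * i))⁻¹ =
      invRising (1 / 2) k (ν * (i + 1 / 2))⁻¹ * (Real.Gamma (ν * (i + 1 / 2) + 1 / 2))⁻¹ := by
    have hs : 0 < ν * ((i : ℝ) + 1 / 2) := by positivity
    rw [← Gamma_mul_inv_Gamma_add_nat hs (by positivity), mul_right_comm, mul_inv_cancel₀ (hne i),
      one_mul]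
    ring_nf
  have hrelative := (isBigO_cmpWeight_mul_Gamma_sub hν).trans
    ((isEquivalent_invRising (1 / 2) 8).isBigO_symm.comp_tendsto (tendsto_inv_mul_nat_add_half hν))
  have hbound := hrelative.mul
    (isBigO_refl (fun i : ℕ => (Real.Gamma (ν * (i + 1 / 2) + 1 / 2))⁻¹) atTop)
  obtain ⟨C, -, hC⟩ := bound_of_isBigO_nat_atTop hbound
  refine ⟨C, fun i => ?_⟩
  have hpos : 0 < (Real.Gamma ((1 + ν) / 2 + (8 : ℕ) + ν * i))⁻¹ :=
    inv_pos.2 (Real.Gamma_pos_of_pos (by positivity))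
  have hCi := hC (x := i) (by rw [Function.comp_apply, ← hshift 8 i]; exact hpos.ne')
  rw [Function.comp_apply, ← hshift 8 i, Real.norm_of_nonneg hpos.le, Real.norm_eq_abs,
    sub_mul, Finset.sum_mul, mul_inv_cancel_right₀ (hne i)] at hCi
  simpa only [hshift, mul_assoc] using hCi

end InverseFactorialPower

theorem norm_tsum_sub_tsum_le {ι E : Type*} [NormedAddCommGroup E] [CompleteSpace E] {f g : ι → E}
    {h : ι → ℝ} (hg : Summable g) (hh : Summable h) (hfg : ∀ i, ‖f i - g i‖ ≤ h i) :
    ‖∑' i, f i - ∑' i, g i‖ ≤ ∑' i, h i := by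
  have hf : Summable f := by simpa using (hh.of_norm_bounded hfg).add hg
  rw [← hf.tsum_sub hg]
  exact tsum_of_norm_bounded hh.hasSum hfg

section InverseFactorialTransfer

variable {ν β C : ℝ} {w c : ℕ → ℝ} {N : ℕ}

theorem inv_pow_mul_poissonWeight_add {x : ℝ} (hx : 0 < x) (t : ℝ) (j : ℕ) :
    (x ^ j)⁻¹ * poissonWeight x (t + j) =
      Real.exp (-x) * x ^ (t - 1) * (Real.Gamma (t + j))⁻¹ := by
  rw [poissonWeight, add_sub_right_comm, Real.rpow_add_natCast hx.ne']
  field_simp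

theorem abs_mul_exp_neg_mul_rpow_sub_sum_poissonWeight_le {x : ℝ} (hx : 0 < x) {i : ℕ}
    (hw : |w i - ∑ j ∈ Finset.range N, c j * (Real.Gamma (β + j + ν * i))⁻¹| ≤
      C * (Real.Gamma (β + N + ν * i))⁻¹) :
    |w i * (Real.exp (-x) * x ^ (β + ν * i - 1)) -
      ∑ j ∈ Finset.range N, c j * (x ^ j)⁻¹ * poissonWeight x (β + j + ν * i)| ≤
      C * (x ^ N)⁻¹ * poissonWeight x (β + N + ν * i) := by
  have hpos : 0 < Real.exp (-x) * x ^ (β + ν * i - 1) := by positivity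
  have hcomm (j : ℕ) : β + j + ν * i = β + ν * i + j := add_right_comm ..
  simp only [hcomm, mul_assoc, inv_pow_mul_poissonWeight_add hx] at hw ⊢
  calc _ = |w i - ∑ j ∈ Finset.range N, c j * (Real.Gamma (β + ν * i + j))⁻¹| *
        (Real.exp (-x) * x ^ (β + ν * i - 1)) := by
        rw [← abs_of_pos hpos, ← abs_mul, abs_of_pos hpos, sub_mul, Finset.sum_mul]
        congr 2
        exact Finset.sum_congr rfl fun j _ => by ring
    _ ≤ C * (Real.Gamma (β + ν * i + N))⁻¹ * (Real.exp (-x) * x ^ (β + ν * i - 1)) := by gcongr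
    _ = _ := by ring

theorem abs_tsum_mul_exp_neg_mul_rpow_sub_sum_le {x : ℝ} (hx : 0 < x) (hν : 0 < ν) (hβ : 0 < β)
    (hw : ∀ i : ℕ, |w i - ∑ j ∈ Finset.range N, c j * (Real.Gamma (β + j + ν * i))⁻¹| ≤
      C * (Real.Gamma (β + N + ν * i))⁻¹) :
    |∑' i : ℕ, w i * (Real.exp (-x) * x ^ (β + ν * i - 1)) - ∑ j ∈ Finset.range N,
      c j * (x ^ j)⁻¹ * ∑' i : ℕ, poissonWeight x (β + j + ν * i)| ≤
      C * (x ^ N)⁻¹ * ∑' i : ℕ, poissonWeight x (β + N + ν * i) := by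
  have hsummable (j : ℕ) (a : ℝ) :
      Summable fun i : ℕ => a * poissonWeight x (β + j + ν * i) :=
    (summable_poissonWeight hx hν (by positivity)).mul_left a
  simp only [← tsum_mul_left]
  rw [← Summable.tsum_finsetSum fun j _ => hsummable j _]
  exact norm_tsum_sub_tsum_le (summable_sum fun j _ => hsummable j _) (hsummable N _)
    fun i => abs_mul_exp_neg_mul_rpow_sub_sum_poissonWeight_le hx (hw i)

theorem isBigO_tsum_poissonWeight_one (hν : 0 < ν) {b : ℝ} (hb : 0 < b) :
    (fun x => ∑' i : ℕ, poissonWeight x (b + ν * i)) =O[atTop] fun _ => (1 : ℝ) := by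
  have hsub := isBigO_tsum_poissonWeight_sub_one hν hb 0
  simp only [pow_zero, inv_one] at hsub
  refine ((hsub.add (isBigO_refl _ _)).const_mul_left ν⁻¹).congr_left fun x => ?_
  rw [sub_add_cancel, inv_mul_cancel_left₀ hν.ne']

theorem isBigO_tsum_mul_exp_neg_mul_rpow_sub_sum (hν : 0 < ν) (hβ : 0 < β)
    (hw : ∀ i : ℕ, |w i - ∑ j ∈ Finset.range N, c j * (Real.Gamma (β + j + ν * i))⁻¹| ≤
      C * (Real.Gamma (β + N + ν * i))⁻¹) :
    (fun x => ν * ∑' i : ℕ, w i * (Real.exp (-x) * x ^ (β + ν * i - 1)) -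
      ∑ j ∈ Finset.range N, c j * (x ^ j)⁻¹) =O[atTop] fun x => (x ^ N)⁻¹ := by
  have hseries : (fun x => ∑' i : ℕ, w i * (Real.exp (-x) * x ^ (β + ν * i - 1)) -
      ∑ j ∈ Finset.range N, c j * (x ^ j)⁻¹ * ∑' i : ℕ, poissonWeight x (β + j + ν * i))
      =O[atTop] fun x => (x ^ N)⁻¹ := by
    have hmajorant := ((isBigO_refl (fun x : ℝ => (x ^ N)⁻¹) atTop).const_mul_left C).mul
      (isBigO_tsum_poissonWeight_one hν (b := β + N) (by positivity))
    simp only [mul_one] at hmajorant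
    refine (IsBigO.of_norm_eventuallyLE ?_).trans hmajorant
    filter_upwards [eventually_gt_atTop 0] with x hx using
      abs_tsum_mul_exp_neg_mul_rpow_sub_sum_le hx hν hβ hw
  have hterm (j : ℕ) : (fun x => c j * (x ^ j)⁻¹ *
      (ν * ∑' i : ℕ, poissonWeight x (β + j + ν * i) - 1)) =O[atTop] fun x => (x ^ N)⁻¹ := by
    have hbounded : (fun x : ℝ => (x ^ j)⁻¹) =O[atTop] fun _ => (1 : ℝ) := by
      refine IsBigO.of_norm_eventuallyLE ?_
      filter_upwards [eventually_ge_atTop 1] with x hx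
      rw [Real.norm_of_nonneg (by positivity)]
      exact inv_le_one_of_one_le₀ (one_le_pow₀ hx)
    simpa only [one_mul] using (hbounded.const_mul_left (c j)).mul
      (isBigO_tsum_poissonWeight_sub_one hν (b := β + j) (by positivity) N)
  refine ((hseries.const_mul_left ν).add
    (IsBigO.sum fun j (_ : j ∈ Finset.range N) => hterm j)).congr_left fun x => ?_
  simp only [Finset.sum_apply, mul_sub, Finset.mul_sum, Finset.sum_sub_distrib, mul_one,
    mul_left_comm _ ν, sub_add_sub_cancel]

end InverseFactorialTransfer

theorem cmpZ_mul_eq_tsum_cmpWeight {ν lam : ℝ} (hν : 0 < ν) (hlam : 0 < lam) :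
    cmpZ lam ν * lam ^ ((ν - 1) / (2 * ν)) * (2 * Real.pi) ^ ((ν - 1) / 2) *
        Real.sqrt ν * Real.exp (-(ν * lam ^ (1 / ν))) =
      ν * ∑' i : ℕ, cmpWeight ν i * (Real.exp (-(ν * lam ^ (1 / ν))) *
        (ν * lam ^ (1 / ν)) ^ ((1 + ν) / 2 + ν * i - 1)) := by
  rw [cmpZ, ← tsum_mul_right, ← tsum_mul_right, ← tsum_mul_right, ← tsum_mul_right,
    ← tsum_mul_left]
  refine tsum_congr fun i => ?_
  have hpower : (ν * lam ^ (1 / ν)) ^ ((1 + ν) / 2 + ν * i - 1) =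
      ν ^ ((1 + ν) / 2 + ν * i - 1) * (lam ^ i * lam ^ ((ν - 1) / (2 * ν))) := by
    rw [Real.mul_rpow hν.le (by positivity), ← Real.rpow_mul hlam.le, ← Real.rpow_natCast lam i,
      ← Real.rpow_add hlam]
    congr 2
    field_simp
    ring
  have hsqrt :
      √ν = ν * (ν ^ (-(ν * ((i : ℝ) + 1 / 2))) * ν ^ ((1 + ν) / 2 + ν * i - 1)) := by
    rw [← Real.rpow_add hν, ← Real.rpow_one_add' hν.le (by ring_nf; norm_num), Real.sqrt_eq_rpow]
    ring_nf
  rw [hpower, hsqrt, cmpWeight]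
  ring

theorem tendsto_const_mul_rpow_one_div_atTop {ν : ℝ} (hν : 0 < ν) :
    Tendsto (fun lam : ℝ => ν * lam ^ (1 / ν)) atTop atTop :=
  (tendsto_rpow_atTop (one_div_pos.2 hν)).const_mul_atTop hν

theorem isBigO_inv_mul_rpow_pow (ν : ℝ) (n : ℕ) :
    (fun lam : ℝ => ((ν * lam ^ (1 / ν)) ^ n)⁻¹) =O[atTop] fun lam => lam ^ (-(n / ν)) := by
  refine ((isBigO_refl _ _).const_mul_left (ν ^ n)⁻¹).congr' ?_ .rfl
  filter_upwards [eventually_ge_atTop 0] with lam hlam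
  rw [mul_pow, mul_inv, ← Real.rpow_mul_natCast hlam, ← Real.rpow_neg hlam, one_div_mul_eq_div]

/-- Eight-term asymptotics of the CMP normalizing constant:
`Z(λ,ν) = exp(ν λ^{1/ν}) / (λ^{(ν-1)/(2ν)} (2π)^{(ν-1)/2} √ν)
          (∑_{k=0}^{7} c_k (ν λ^{1/ν})^{-k} + O(λ^{-8/ν}))` as `λ → ∞`. -/
theorem cmpZ_eight_term_asymptotic (ν : ℝ) (hν : 0 < ν) :
    ∃ C > (0 : ℝ), ∃ Λ > (0 : ℝ), ∀ lam : ℝ, lam ≥ Λ →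
      |cmpZ lam ν * lam ^ ((ν - 1) / (2 * ν)) * (2 * Real.pi) ^ ((ν - 1) / 2) *
          Real.sqrt ν * Real.exp (-(ν * lam ^ (1 / ν))) -
        ∑ k ∈ Finset.range 8, cmpCoeff ν k * ((ν * lam ^ (1 / ν)) ^ k)⁻¹|
        ≤ C * lam ^ (-(8 / ν)) := by
  obtain ⟨C, hweight⟩ := exists_abs_cmpWeight_sub_le hν
  have hseries := (isBigO_tsum_mul_exp_neg_mul_rpow_sub_sum hν (by positivity)
    hweight).comp_tendsto (tendsto_const_mul_rpow_one_div_atTop hν)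
  obtain ⟨K, hK, hbound⟩ := (hseries.trans (isBigO_inv_mul_rpow_pow ν 8)).exists_pos
  obtain ⟨Λ, hΛ⟩ := eventually_atTop.1 hbound.bound
  refine ⟨K, hK, max Λ 1, by positivity, fun lam hlam => ?_⟩
  have hlam0 : 0 < lam := one_pos.trans_le ((le_max_right _ _).trans hlam)
  have hle := hΛ lam ((le_max_left _ _).trans hlam)
  rw [Function.comp_apply, ← cmpZ_mul_eq_tsum_cmpWeight hν hlam0, Real.norm_eq_abs,
    Real.norm_of_nonneg (by positivity)] at hle
  exact hle
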